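/- Let (A, f) be a colored tree such that Aut_f⁺(A) leaves no nonempty proper subtree of A invariant, and suppose Aut_f⁺(A) is boundedly simple and nontrivial. Then: (1) there exist cardinals n, m ≥ 3 such that A is an almost (n,m)-regular tree (a subdivision of the (n,m)-biregular tree); and (2) Aut_f⁺(A) is 32-boundedly simple. -/

import Mathlib

/-!
Write `H` for `Aut_f⁺(A)`.  A half-tree `s → t` is the set of vertices `x` with `Step G s t x`.

**Almost biregularity.**  A *turn* is a path `p z q` with `p ≠ q` and an element of `H` fixing `z`
and sending `p` to `q`.  Distinct vertices in one `H`-orbit are joined by a geodesic containing a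
turn (`hasTurn`), every half-tree contains a turning vertex (`exists_turny`, from the absence of
invariant subtrees), and turning vertices have at least three neighbors (`third_neighbor`).  Let
`[v, a]` be a shortest segment whose end vertices both turn the edge pointing into it (`Seg`).
Distinct points of `[v, a]` are inequivalent.  The key claim is that `[v, a]` is a fundamental
domain (`Seg.cover`).  If not, some edge at a point of the segment leads to a turning vertex `b`
inequivalent to the whole segment.  Then the rotations about `v`, `a` and `b` generate two
translations `γ` and `β` such that the segment from `b` to `γγβ b` occurs in each period of the
axis of `γγβγββ`, but never with the reverse orientation (`no_word`).  Counting translates of this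
segment, forwards minus backwards, gives a Brooks-type quasimorphism `phi` that is unbounded on
`H`.  But quasimorphisms of this kind are bounded on elements with a fixed vertex, and in a
boundedly simple group every element is a product of boundedly many conjugates of a fixed element
fixing an edge, so `phi` must be bounded (`phi_bounded`).  Hence every vertex is either `Trans`
(branching, with all neighbors equivalent under its stabilizer) or `Rigid` (at most two neighbors,
fixed by its stabilizer), and the distance to `v` inside the fundamental segment is the required
coloring (`Seg.almostBiregular`).

**The bound 32.**  Automorphisms can be glued along disjoint half-trees (`glue`).  Every element of
`H` is a product of two elements fixing a vertex (`two_fixers`), each of these is a product of two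
elements fixing an edge (`two_edge_fixers`), and each of these is a product of two elements
supported on half-trees (`two_supp`).  Any half-tree can be moved into any other (`move`), in
particular into one hanging off the axis of a given translation `γ`, whose `γ`-translates are
disjoint; so an element supported on a half-tree is, up to conjugation, a commutator of `γ` with an
element acting on the successive translates (`commutator`).  This makes every element of `H` a
product of `2 * 2 * 2 * 2 = 16` conjugates of `γ` and `γ⁻¹`.  Finally, a nontrivial `g` either has
no fixed vertex, and is itself such a translation, or the product of `g` with a suitable conjugate
is one (`exists_translation`), which doubles the count to `32`.
-/

open Pointwise

namespace BSTrees

universe u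

variable {V : Type u} {I : Type*}

/-- `π` is an automorphism of the graph `G`. -/
def IsAut (G : SimpleGraph V) (π : Equiv.Perm V) : Prop :=
  ∀ x y : V, G.Adj (π x) (π y) ↔ G.Adj x y

/-- The automorphism group of `G`, as a subgroup of `Equiv.Perm V`. -/
def autGroup (G : SimpleGraph V) : Subgroup (Equiv.Perm V) where
  carrier := {π | IsAut G π}
  one_mem' := fun _ _ => Iff.rfl
  mul_mem' := fun {a b} ha hb x y => (ha (b x) (b y)).trans (hb x y)
  inv_mem' := fun {a} ha x y => by
    have h := (ha (a⁻¹ x) (a⁻¹ y)).symm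
    simpa using h

/-- `z` lies on the geodesic between `x` and `y`. -/
def OnGeodesic (G : SimpleGraph V) (x y z : V) : Prop :=
  G.dist x z + G.dist z y = G.dist x y

/-- A set of vertices closed under geodesics (inducing a subtree). -/
def GeodClosed (G : SimpleGraph V) (S : Set V) : Prop :=
  ∀ x ∈ S, ∀ y ∈ S, ∀ z, OnGeodesic G x y z → z ∈ S

/-- A rotation: an automorphism fixing some vertex. -/
def IsRotation (π : Equiv.Perm V) : Prop := ∃ v, π v = v

/-- An inversion (symmetry): an automorphism swapping the endpoints of some edge. -/
def IsInversion (G : SimpleGraph V) (π : Equiv.Perm V) : Prop :=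
  ∃ x y, G.Adj x y ∧ π x = y ∧ π y = x

/-- A translation: neither a rotation nor an inversion. -/
def IsTranslation (G : SimpleGraph V) (π : Equiv.Perm V) : Prop :=
  ¬ IsRotation π ∧ ¬ IsInversion G π

/-- `ℓ` is the translation length of `π`: the minimum of `dist s (π s)`. -/
def TranslationLengthIs (G : SimpleGraph V) (π : Equiv.Perm V) (ℓ : ℕ) : Prop :=
  IsLeast {d | ∃ s, G.dist s (π s) = d} ℓ

/-- Elements of `H` pointwise stabilizing some edge of `G`. -/
def edgeStabilizers (G : SimpleGraph V) (H : Subgroup (Equiv.Perm V)) :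
    Set (Equiv.Perm V) :=
  {π | π ∈ H ∧ ∃ x y, G.Adj x y ∧ π x = x ∧ π y = y}

/-- `H⁺`: the subgroup generated by pointwise stabilizers in `H` of edges. -/
def plusGroup (G : SimpleGraph V) (H : Subgroup (Equiv.Perm V)) :
    Subgroup (Equiv.Perm V) :=
  Subgroup.closure (edgeStabilizers G H)

/-- The group of color-preserving automorphisms of the colored tree `(G, f)`. -/
def autf (G : SimpleGraph V) (f : V → I) : Subgroup (Equiv.Perm V) where
  carrier := {π | IsAut G π ∧ ∀ v, f (π v) = f v}
  one_mem' := ⟨fun _ _ => Iff.rfl, fun _ => rfl⟩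
  mul_mem' := fun {a b} ha hb =>
    ⟨fun x y => (ha.1 (b x) (b y)).trans (hb.1 x y),
     fun v => (ha.2 (b v)).trans (hb.2 v)⟩
  inv_mem' := fun {a} ha => by
    refine ⟨fun x y => ?_, fun v => ?_⟩
    · have h := (ha.1 (a⁻¹ x) (a⁻¹ y)).symm
      simpa using h
    · have h := (ha.2 (a⁻¹ v)).symm
      simpa using h

/-- `Aut_f⁺(A)`. -/
def autfPlus (G : SimpleGraph V) (f : V → I) : Subgroup (Equiv.Perm V) :=
  plusGroup G (autf G f)

/-- `Aut⁺(A)`. -/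
def autPlus (G : SimpleGraph V) : Subgroup (Equiv.Perm V) :=
  plusGroup G (autGroup G)

/-- A ray in `G`. -/
def IsRay (G : SimpleGraph V) (r : ℕ → V) : Prop :=
  Function.Injective r ∧ ∀ n, G.Adj (r n) (r (n + 1))

/-- Two rays determine the same end iff their images have infinite intersection. -/
def SameEnd (r r' : ℕ → V) : Prop := (Set.range r ∩ Set.range r').Infinite

/-- `H` stabilizes the end of the ray `r`. -/
def StabilizesEnd (G : SimpleGraph V) (H : Subgroup (Equiv.Perm V)) (r : ℕ → V) :
    Prop :=
  ∀ π ∈ H, ∀ r' : ℕ → V, IsRay G r' → SameEnd r' r → SameEnd (π ∘ r') r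

/-- `H` does not stabilize any end of `G`. -/
def NoStabilizedEnd (G : SimpleGraph V) (H : Subgroup (Equiv.Perm V)) : Prop :=
  ¬ ∃ r : ℕ → V, IsRay G r ∧ StabilizesEnd G H r

/-- `H` leaves no nonempty proper subtree of `G` invariant. -/
def NoInvariantSubtree (G : SimpleGraph V) (H : Subgroup (Equiv.Perm V)) : Prop :=
  ¬ ∃ S : Set V, S.Nonempty ∧ S ≠ Set.univ ∧ GeodClosed G S ∧
    ∀ π ∈ H, π '' S = S

/-- A path in the tree: a nonempty geodesically closed set in which every vertex
has at most two neighbors inside the set. -/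
def IsPathSet (G : SimpleGraph V) (C : Set V) : Prop :=
  C.Nonempty ∧ GeodClosed G C ∧
    ∀ v ∈ C, ∀ a ∈ C, ∀ b ∈ C, ∀ c ∈ C,
      G.Adj v a → G.Adj v b → G.Adj v c → a = b ∨ a = c ∨ b = c

/-- `p` is a nearest-point projection onto `C`. -/
def IsProj (G : SimpleGraph V) (C : Set V) (p : V → V) : Prop :=
  ∀ x, p x ∈ C ∧ ∀ c ∈ C, G.dist x (p x) ≤ G.dist x c

/-- Tits' independence property `(P)` for `H ≤ Aut(G)`: for every path `C` with
nearest-point projection `p`, and every family of elements of the pointwise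
stabilizer of `C`, there is a unique element of that stabilizer agreeing with
the `s`-th member of the family on the fiber `p⁻¹(s)`, for every `s ∈ C`. -/
def PropertyP (G : SimpleGraph V) (H : Subgroup (Equiv.Perm V)) : Prop :=
  ∀ C : Set V, IsPathSet G C → ∀ p : V → V, IsProj G C p →
    ∀ gs : V → Equiv.Perm V,
      (∀ s ∈ C, gs s ∈ H ∧ ∀ c ∈ C, gs s c = c) →
      ∃! g : Equiv.Perm V, g ∈ H ∧ (∀ c ∈ C, g c = c) ∧
        ∀ s ∈ C, ∀ x, p x = s → g x = gs s x

/-- A group is `N`-boundedly simple if every nontrivial element is a product of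
at most `N` conjugates of `g` or of `g⁻¹`, for every nontrivial `g`. -/
def IsNBoundedlySimple (Γ : Type*) [Group Γ] (N : ℕ) : Prop :=
  ∀ g h : Γ, g ≠ 1 → h ≠ 1 →
    ∃ l : List Γ, l.length ≤ N ∧
      (∀ x ∈ l, ∃ c : Γ, x = c * g * c⁻¹ ∨ x = c * g⁻¹ * c⁻¹) ∧ l.prod = h

/-- A group is boundedly simple if it is `N`-boundedly simple for some `N`. -/
def IsBoundedlySimple (Γ : Type*) [Group Γ] : Prop :=
  ∃ N : ℕ, IsNBoundedlySimple Γ N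

/-- The conjugacy class of `g` under conjugation by elements of `H`. -/
def conjClassIn {Γ : Type*} [Group Γ] (H : Subgroup Γ) (g : Γ) : Set Γ :=
  {k | ∃ c ∈ H, k = c * g * c⁻¹}

/-- A ramification point: a vertex with at least three neighbors. -/
def IsRamification (G : SimpleGraph V) (r : V) : Prop :=
  ∃ a b c, a ≠ b ∧ a ≠ c ∧ b ≠ c ∧ G.Adj r a ∧ G.Adj r b ∧ G.Adj r c

/-- An `(n,m)`-biregular tree: a proper 2-coloring where every vertex of the
first color has exactly `n` neighbors and every vertex of the second has `m`. -/
def IsBiregular (G : SimpleGraph V) (n m : Cardinal.{u}) : Prop :=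
  ∃ c : V → Bool, (∀ x y, G.Adj x y → c x ≠ c y) ∧
    (∀ v, c v = false → Cardinal.mk (G.neighborSet v) = n) ∧
    (∀ v, c v = true → Cardinal.mk (G.neighborSet v) = m)

/-- An almost `(n,m)`-regular tree: a subdivision of the `(n,m)`-biregular tree,
described by a coloring `g : V → {0,…,k}`. -/
def IsAlmostBiregular (G : SimpleGraph V) (n m : Cardinal.{u}) : Prop :=
  ∃ k : ℕ, 1 ≤ k ∧ ∃ g : V → ℕ, (∀ v, g v ≤ k) ∧
    (∀ v, g v = 0 → (∀ w, G.Adj v w → g w = 1) ∧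
      Cardinal.mk (G.neighborSet v) = n) ∧
    (∀ v, g v = k → (∀ w, G.Adj v w → g w = k - 1) ∧
      Cardinal.mk (G.neighborSet v) = m) ∧
    (∀ v, 0 < g v → g v < k → ∃ a b, a ≠ b ∧ G.Adj v a ∧ G.Adj v b ∧
      g a = g v - 1 ∧ g b = g v + 1 ∧ ∀ w, G.Adj v w → w = a ∨ w = b)

/-- The axis of a translation: vertices of minimal displacement. -/
def axisSet (G : SimpleGraph V) (π : Equiv.Perm V) : Set V :=
  {v | ∀ w, G.dist v (π v) ≤ G.dist w (π w)}

/-! ### Geodesics and half-trees -/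

/-- `s` is the first vertex after `z` on the geodesic from `z` to `t`.  For adjacent `z`, `s` the
set `{t | Step G z s t}` is the half-tree on the `s`-side of the edge `z s`. -/
def Step (G : SimpleGraph V) (z s t : V) : Prop :=
  G.Adj z s ∧ G.dist s t + 1 = G.dist z t

section Metric

variable {G : SimpleGraph V}

lemma tri (hG : G.IsTree) (x y z : V) : G.dist x z ≤ G.dist x y + G.dist y z :=
  hG.connected.dist_triangle

lemma dist_zero (hG : G.IsTree) {x y : V} (h : G.dist x y = 0) : x = y :=
  hG.connected.dist_eq_zero_iff.1 h

lemma dist_pos (hG : G.IsTree) {x y : V} (h : x ≠ y) : 0 < G.dist x y :=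
  hG.connected.pos_dist_of_ne h

lemma adj_cases (hG : G.IsTree) {x y : V} (h : G.Adj x y) (z : V) :
    Step G x y z ∨ Step G y x z := by
  rcases hG.dist_eq_dist_add_one_of_adj z h with h1 | h1
  · left; exact ⟨h, by rw [G.dist_comm (u := y), G.dist_comm (u := x)]; omega⟩
  · right; exact ⟨h.symm, by rw [G.dist_comm (u := y), G.dist_comm (u := x)]; omega⟩

lemma Step.asymm {x y z : V} (h : Step G x y z) : ¬ Step G y x z := by
  intro h'; have := h.2; have := h'.2; omega

lemma step_iff_not (hG : G.IsTree) {x y : V} (h : G.Adj x y) (z : V) :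
    Step G x y z ↔ ¬ Step G y x z :=
  ⟨fun h' => h'.asymm, fun h' => (adj_cases hG h z).resolve_right h'⟩

lemma step_exists (hG : G.IsTree) {z t : V} (h : z ≠ t) : ∃ s, Step G z s t := by
  obtain ⟨p, hp⟩ := hG.connected.exists_walk_length_eq_dist z t
  cases p with
  | nil => exact absurd rfl h
  | @cons _ s _ hadj p =>
    refine ⟨s, hadj, ?_⟩
    have h1 := SimpleGraph.dist_le p
    have h2 := tri hG z s t
    have h3 : G.dist z s = 1 := SimpleGraph.dist_eq_one_iff_adj.2 hadj
    simp only [SimpleGraph.Walk.length_cons] at hp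
    omega

lemma step_unique (hG : G.IsTree) {z s s' t : V} (h : Step G z s t) (h' : Step G z s' t) :
    s = s' := by
  obtain ⟨p, hp⟩ := hG.connected.exists_walk_length_eq_dist s t
  obtain ⟨p', hp'⟩ := hG.connected.exists_walk_length_eq_dist s' t
  have e1 : (SimpleGraph.Walk.cons h.1 p).IsPath :=
    SimpleGraph.Walk.isPath_of_length_eq_dist _ (by
      rw [SimpleGraph.Walk.length_cons, hp]; exact h.2)
  have e2 : (SimpleGraph.Walk.cons h'.1 p').IsPath :=
    SimpleGraph.Walk.isPath_of_length_eq_dist _ (by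
      rw [SimpleGraph.Walk.length_cons, hp']; exact h'.2)
  have := (hG.isAcyclic.subsingleton_path z t).elim ⟨_, e1⟩ ⟨_, e2⟩
  simp only [Subtype.mk.injEq] at this
  injection this

lemma dist_adj {x y : V} (h : G.Adj x y) : G.dist x y = 1 :=
  SimpleGraph.dist_eq_one_iff_adj.2 h

lemma step_self {x y : V} (h : G.Adj x y) : Step G x y y :=
  ⟨h, by simp [dist_adj h]⟩

lemma step_extend (hG : G.IsTree) {z s t u : V} (h : Step G z s t)
    (hb : G.dist z t + G.dist t u = G.dist z u) :
    Step G z s u := by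
  refine ⟨h.1, ?_⟩
  have := h.2; have := tri hG s t u; have := tri hG z s u; have := dist_adj h.1
  omega

lemma step_restrict (hG : G.IsTree) {z s t u : V} (h : Step G z s u)
    (hb : G.dist z t + G.dist t u = G.dist z u) (hne : z ≠ t) : Step G z s t := by
  obtain ⟨s', hs'⟩ := step_exists hG hne
  rwa [step_unique hG h (step_extend hG hs' hb)]

/-- Two geodesics issuing from `m` with distinct first steps concatenate to a geodesic. -/
lemma concat (hG : G.IsTree) {x m z : V} (h : ∀ s, Step G m s x → ¬ Step G m s z) :
    G.dist x m + G.dist m z = G.dist x z := by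
  induction hn : G.dist x m generalizing x with
  | zero => rw [dist_zero hG hn]; simp
  | succ n ih =>
    have hne : x ≠ m := by rintro rfl; simp at hn
    obtain ⟨s, hs⟩ := step_exists hG hne
    have hsm : G.dist s m = n := by have := hs.2; omega
    have hc := G.dist_comm (u := s) (v := m)
    have hc' := G.dist_comm (u := x) (v := m)
    have hsx := dist_adj hs.1.symm
    have key := ih (x := s) (fun r hr => h r (step_extend hG hr (by omega))) hsm
    rcases adj_cases hG hs.1 z with h1 | h1
    · have := h1.2; omega
    · exfalso
      by_cases hsm' : s = m
      · subst hsm'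
        exact h x (step_self h1.1) h1
      · obtain ⟨r, hr⟩ := step_exists hG hsm'
        have : r = x := step_unique hG (step_extend hG hr (by omega)) h1
        subst this
        exact hs.asymm hr

/-- Crossing an edge: the geodesic between vertices on different sides passes the edge. -/
lemma cross (hG : G.IsTree) {x y z t : V} (hz : Step G x y z) (ht : Step G y x t) :
    G.dist t x + G.dist x z = G.dist t z := by
  apply concat hG
  intro s hs hs'
  rw [step_unique hG hs' hz] at hs
  exact hs.asymm ht

/-- Two vertices of a geodesic are ordered along it. -/
lemma order (hG : G.IsTree) {x q m z : V} (hq : G.dist x q + G.dist q z = G.dist x z)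
    (hm : G.dist x m + G.dist m z = G.dist x z) (hle : G.dist x q ≤ G.dist x m) :
    G.dist x q + G.dist q m = G.dist x m := by
  induction hn : G.dist x q generalizing x with
  | zero => rw [dist_zero hG hn]; simp
  | succ n ih =>
    have hxq : x ≠ q := by rintro rfl; simp at hn
    have hxm : x ≠ m := by rintro rfl; rw [SimpleGraph.dist_self] at hle; omega
    have hxz : x ≠ z := by
      rintro rfl
      have := G.dist_comm (u := x) (v := q)
      rw [SimpleGraph.dist_self] at hq; omega
    obtain ⟨s, hs⟩ := step_exists hG hxz
    have h1 := (step_restrict hG hs hq hxq).2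
    have h2 := (step_restrict hG hs hm hxm).2
    have h3 := hs.2
    have := ih (x := s) (by omega) (by omega) (by omega) (by omega)
    omega

lemma pos_unique (hG : G.IsTree) {x q m z : V} (hq : G.dist x q + G.dist q z = G.dist x z)
    (hm : G.dist x m + G.dist m z = G.dist x z) (he : G.dist x q = G.dist x m) : q = m := by
  have := order hG hq hm he.le
  exact dist_zero hG (by omega)

/-- Medians exist in trees. -/
lemma median (hG : G.IsTree) (x y z : V) : ∃ m, G.dist x m + G.dist m y = G.dist x y ∧
    G.dist y m + G.dist m z = G.dist y z ∧ G.dist x m + G.dist m z = G.dist x z := by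
  induction hn : G.dist x y generalizing x with
  | zero => obtain rfl := dist_zero hG hn; exact ⟨x, by simp, by simp, by simp⟩
  | succ n ih =>
    have hne : x ≠ y := by rintro rfl; simp at hn
    obtain ⟨s, hs⟩ := step_exists hG hne
    have h2 := hs.2
    by_cases hz : Step G x s z
    · have h3 := hz.2
      obtain ⟨m, h4, h5, h6⟩ := ih s (by omega)
      have e1 := tri hG x m y
      have e2 := tri hG x m z
      have e3 := tri hG x s m
      have e4 := dist_adj hs.1
      exact ⟨m, by omega, h5, by omega⟩
    · refine ⟨x, by simp [hn], ?_, by simp⟩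
      apply concat hG
      intro r hr hr'
      rw [step_unique hG hr hs] at hr'
      exact hz hr'

/-- A vertex at a prescribed distance on a geodesic. -/
lemma exists_at (hG : G.IsTree) {x y : V} {i : ℕ} (hi : i ≤ G.dist x y) :
    ∃ z, G.dist x z = i ∧ G.dist x z + G.dist z y = G.dist x y := by
  induction i with
  | zero => exact ⟨x, by simp, by simp⟩
  | succ i ih =>
    obtain ⟨z, h1, h2⟩ := ih (by omega)
    have hne : z ≠ y := by rintro rfl; omega
    obtain ⟨s, hs⟩ := step_exists hG hne
    have := hs.2; have := tri hG x z s; have := tri hG x s y; have := dist_adj hs.1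
    exact ⟨s, by omega, by omega⟩

/-- The only edge leaving a half-tree is its root edge. -/
lemma boundary (hG : G.IsTree) {x y p q : V} (hpq : G.Adj p q) (hp : Step G x y p)
    (hq : Step G y x q) :
    p = y ∧ q = x := by
  have h1 := cross hG hp hq
  have h2 := cross hG hq hp
  have := hp.2; have := hq.2; have := dist_adj hpq; have := dist_adj hpq.symm
  have := G.dist_comm (u := x) (v := p)
  have := G.dist_comm (u := y) (v := p)
  have := G.dist_comm (u := x) (v := q)
  have := G.dist_comm (u := y) (v := q)
  exact ⟨dist_zero hG (by omega), dist_zero hG (by omega)⟩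

end Metric

/-! ### Automorphisms and displacements -/

section Automorphisms

variable {G : SimpleGraph V} {f : V → I}

lemma aut_dist {g : Equiv.Perm V} (hg : g ∈ autf G f) (x y : V) :
    G.dist (g x) (g y) = G.dist x y := by
  let e : G ≃g G := ⟨g, fun {a b} => hg.1 a b⟩
  have key : ∀ (e : G ≃g G) (x y : V), G.dist (e x) (e y) ≤ G.dist x y := by
    intro e x y
    by_cases h : G.Reachable x y
    · obtain ⟨p, hp⟩ := h.exists_walk_length_eq_dist
      have := SimpleGraph.dist_le (p.map e.toHom)
      rw [SimpleGraph.Walk.length_map] at this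
      exact this.trans hp.le
    · have h' : ¬ G.Reachable (e x) (e y) := by rwa [SimpleGraph.Iso.reachable_iff]
      rw [SimpleGraph.dist_eq_zero_of_not_reachable h']; exact Nat.zero_le _
  refine le_antisymm (key e x y) ?_
  have := key e.symm (g x) (g y)
  have h1 : ∀ z, e.symm (g z) = z := fun z => e.symm_apply_apply z
  rwa [h1, h1] at this

lemma plus_le : autfPlus G f ≤ autf G f := by
  rw [autfPlus, plusGroup, Subgroup.closure_le]
  exact fun g hg => hg.1

lemma plus_dist {g : Equiv.Perm V} (hg : g ∈ autfPlus G f) (x y : V) :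
    G.dist (g x) (g y) = G.dist x y := aut_dist (plus_le hg) x y

lemma step_map {g : Equiv.Perm V} (hg : g ∈ autf G f) {z s t : V} :
    Step G (g z) (g s) (g t) ↔ Step G z s t := by
  unfold Step; rw [aut_dist hg, aut_dist hg, hg.1]

lemma step_map_plus {g : Equiv.Perm V} (hg : g ∈ autfPlus G f) {z s t : V} :
    Step G (g z) (g s) (g t) ↔ Step G z s t := step_map (plus_le hg)

lemma adj_map {g : Equiv.Perm V} (hg : g ∈ autfPlus G f) {z s : V} :
    G.Adj (g z) (g s) ↔ G.Adj z s := (plus_le hg).1 z s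

lemma mem_plus_of_fix {g : Equiv.Perm V} (hg : g ∈ autf G f) {x y : V} (hxy : G.Adj x y)
    (hx : g x = x) (hy : g y = y) : g ∈ autfPlus G f :=
  Subgroup.subset_closure ⟨hg, x, y, hxy, hx, hy⟩

/-- Induction over `Aut_f⁺(A)`: a statement about displacements that holds for elements fixing an
edge and is stable under products holds for the whole group. -/
lemma plus_induction {P : Equiv.Perm V → Prop}
    (hfix : ∀ g ∈ autfPlus G f, ∀ x y, G.Adj x y → g x = x → g y = y → P g)
    (hone : P 1)
    (hmul : ∀ g ∈ autfPlus G f, ∀ h ∈ autfPlus G f, P g → P h → P (g * h))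
    {g : Equiv.Perm V} (hg : g ∈ autfPlus G f) : P g := by
  refine Subgroup.closure_induction'' (G := Equiv.Perm V) (s := edgeStabilizers G (autf G f))
    (p := fun g _ => P g) ?_ ?_ hone ?_ hg
  · rintro g ⟨h, x, y, hxy, hx, hy⟩
    exact hfix g (mem_plus_of_fix h hxy hx hy) x y hxy hx hy
  · rintro g ⟨h, x, y, hxy, hx, hy⟩
    refine hfix g⁻¹ (inv_mem (mem_plus_of_fix h hxy hx hy)) x y hxy ?_ ?_
    · rw [Equiv.Perm.inv_eq_iff_eq, hx]
    · rw [Equiv.Perm.inv_eq_iff_eq, hy]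
  · intro g h hg hh h1 h2
    exact hmul g hg h hh h1 h2

lemma tripod_even (hG : G.IsTree) (x y z : V) :
    Even (G.dist x y + G.dist y z + G.dist x z) := by
  obtain ⟨m, h1, h2, h3⟩ := median hG x y z
  have := G.dist_comm (u := m) (v := y)
  exact ⟨G.dist x m + G.dist y m + G.dist m z, by omega⟩

/-- Elements of `Aut_f⁺(A)` preserve the bipartition of the tree. -/
lemma even_disp (hG : G.IsTree) {g : Equiv.Perm V} (hg : g ∈ autfPlus G f) (x : V) :
    Even (G.dist x (g x)) := by
  refine plus_induction (P := fun g => ∀ x, Even (G.dist x (g x))) ?_ ?_ ?_ hg x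
  · intro g hg y _ _ hy _ x
    have h1 := tripod_even hG x y (g x)
    have h2 := plus_dist hg y x
    rw [hy, G.dist_comm (u := y) (v := x)] at h2
    rw [h2] at h1
    rw [Nat.even_add] at h1
    exact h1.1 ⟨_, rfl⟩
  · intro x; simp
  · intro g hg h hh h1 h2 x
    have h3 := tripod_even hG x (g x) (g (h x))
    rw [plus_dist hg, Nat.even_add, Nat.even_add] at h3
    exact h3.1 (iff_of_true (h1 x) (h2 x))

end Automorphisms

/-! ### Counting occurrences of a pattern on geodesics -/

section Counting

variable {G : SimpleGraph V} {f : V → I}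

/-- Position `i` of the geodesic from `x` to `y` is the start of a subsegment of length `ℓ` whose
oriented endpoints are related by `O`. -/
def Occ (G : SimpleGraph V) (O : V → V → Prop) (ℓ : ℕ) (x y : V) (i : ℕ) : Prop :=
  ∃ p q, O p q ∧ G.dist x p = i ∧ G.dist x p + ℓ + G.dist q y = G.dist x y

open Classical in
/-- The number of subsegments of the oriented geodesic `[x, y]` with endpoints related by `O`. -/
noncomputable def cnt (G : SimpleGraph V) (O : V → V → Prop) (ℓ : ℕ) (x y : V) : ℕ :=
  ((Finset.range (G.dist x y)).filter (Occ G O ℓ x y)).card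

lemma cnt_add_le (hG : G.IsTree) {O : V → V → Prop} {ℓ : ℕ} {x m z : V}
    (hm : G.dist x m + G.dist m z = G.dist x z) (hO : ∀ p q, O p q → G.dist p q = ℓ) :
    cnt G O ℓ x m + cnt G O ℓ m z ≤ cnt G O ℓ x z := by
  classical
  unfold cnt
  rw [← Finset.card_image_of_injective
    ((Finset.range (G.dist m z)).filter (Occ G O ℓ m z)) (add_left_injective (G.dist x m)),
    ← Finset.card_union_of_disjoint]
  · apply Finset.card_le_card
    intro i hi
    rw [Finset.mem_union] at hi
    rcases hi with hi | hi
    · simp only [Finset.mem_filter, Finset.mem_range] at hi ⊢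
      obtain ⟨h1, p, q, h2, h3, h4⟩ := hi
      refine ⟨by omega, p, q, h2, h3, ?_⟩
      have := hO p q h2
      have := tri hG q m z; have := tri hG x p q; have := tri hG x q z
      omega
    · simp only [Finset.mem_image, Finset.mem_filter, Finset.mem_range] at hi ⊢
      obtain ⟨j, ⟨h1, p, q, h2, h3, h4⟩, rfl⟩ := hi
      have := hO p q h2
      have := tri hG x m p; have := tri hG x p q; have := tri hG x q z; have := tri hG p q z
      have := tri hG x p z
      refine ⟨by omega, p, q, h2, by omega, by omega⟩
  · rw [Finset.disjoint_left]
    intro i hi hi'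
    simp only [Finset.mem_image, Finset.mem_filter, Finset.mem_range] at hi hi'
    obtain ⟨j, _, rfl⟩ := hi'
    omega

lemma cnt_le_add (hG : G.IsTree) {O : V → V → Prop} {ℓ : ℕ} {x m z : V}
    (hm : G.dist x m + G.dist m z = G.dist x z) (hO : ∀ p q, O p q → G.dist p q = ℓ) :
    cnt G O ℓ x z ≤ cnt G O ℓ x m + cnt G O ℓ m z + (ℓ - 1) := by
  classical
  have hsub : (Finset.range (G.dist x z)).filter (Occ G O ℓ x z) ⊆
      ((Finset.range (G.dist x m)).filter (Occ G O ℓ x m) ∪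
      ((Finset.range (G.dist m z)).filter (Occ G O ℓ m z)).image (· + G.dist x m)) ∪
      Finset.Ico (G.dist x m + 1 - ℓ) (G.dist x m) := by
    intro i hi
    simp only [Finset.mem_filter, Finset.mem_range] at hi
    obtain ⟨h1, p, q, h2, h3, h4⟩ := hi
    have hpq := hO p q h2
    have := tri hG x p q; have := tri hG x q z; have := tri hG p q z; have := tri hG x p z
    rw [Finset.mem_union, Finset.mem_union]
    by_cases hA : i + ℓ ≤ G.dist x m ∧ i < G.dist x m
    · left; left
      have hq := order hG (x := x) (q := q) (m := m) (z := z) (by omega) hm (by omega)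
      have := tri hG q m z
      simp only [Finset.mem_filter, Finset.mem_range]
      exact ⟨by omega, p, q, h2, h3, by omega⟩
    · by_cases hB : i < G.dist x m
      · right
        rw [Finset.mem_Ico]; omega
      · left; right
        have hp := order hG (x := x) (q := m) (m := p) (z := z) hm (by omega) (by omega)
        rw [Finset.mem_image]
        refine ⟨G.dist m p, ?_, by omega⟩
        simp only [Finset.mem_filter, Finset.mem_range]
        exact ⟨by omega, p, q, h2, rfl, by omega⟩
  refine (Finset.card_le_card hsub).trans ?_
  refine (Finset.card_union_le _ _).trans ?_
  have h1 := Finset.card_union_le ((Finset.range (G.dist x m)).filter (Occ G O ℓ x m))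
    (((Finset.range (G.dist m z)).filter (Occ G O ℓ m z)).image (· + G.dist x m))
  have h2 : (((Finset.range (G.dist m z)).filter (Occ G O ℓ m z)).image (· + G.dist x m)).card ≤
    cnt G O ℓ m z := Finset.card_image_le
  rw [Nat.card_Ico]
  unfold cnt at h2 ⊢
  omega

lemma cnt_pos {O : V → V → Prop} {ℓ : ℕ} (hℓ : 0 < ℓ) {x y p q : V} (h : O p q)
    (hb : G.dist x p + ℓ + G.dist q y = G.dist x y) : 0 < cnt G O ℓ x y := by
  classical
  unfold cnt
  apply Finset.card_pos.2
  refine ⟨G.dist x p, ?_⟩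
  simp only [Finset.mem_filter, Finset.mem_range]
  exact ⟨by omega, p, q, h, rfl, hb⟩

lemma exists_of_cnt_pos {O : V → V → Prop} {ℓ : ℕ} {x y : V} (h : 0 < cnt G O ℓ x y) :
    ∃ p q, O p q ∧ G.dist x p + ℓ + G.dist q y = G.dist x y := by
  classical
  obtain ⟨i, hi⟩ := Finset.card_pos.1 h
  simp only [Finset.mem_filter] at hi
  obtain ⟨_, p, q, h1, _, h2⟩ := hi
  exact ⟨p, q, h1, h2⟩

lemma cnt_map {O : V → V → Prop} {ℓ : ℕ} (hinv : ∀ g ∈ autfPlus G f, ∀ p q, O p q → O (g p) (g q))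
    {g : Equiv.Perm V} (hg : g ∈ autfPlus G f) (x y : V) :
    cnt G O ℓ (g x) (g y) = cnt G O ℓ x y := by
  classical
  unfold cnt
  rw [plus_dist hg]
  congr 1
  apply Finset.filter_congr
  intro i _
  have hd := plus_dist hg x y
  constructor
  · rintro ⟨p, q, h1, h2, h3⟩
    have hgi := inv_mem hg
    have ep : ∀ z, g (g⁻¹ z) = z := by intro z; simp
    have e1 := plus_dist hg x (g⁻¹ p)
    have e2 := plus_dist hg (g⁻¹ q) y
    rw [ep] at e1 e2
    exact ⟨g⁻¹ p, g⁻¹ q, hinv _ hgi _ _ h1, by omega, by omega⟩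
  · rintro ⟨p, q, h1, h2, h3⟩
    have e1 := plus_dist hg x p
    have e2 := plus_dist hg q y
    exact ⟨g p, g q, hinv _ hg _ _ h1, by omega, by omega⟩

end Counting

/-! ### The counting quasimorphism -/

section QuasiMorphism

variable {G : SimpleGraph V} {f : V → I} {O : V → V → Prop} {ℓ : ℕ}

/-- The Brooks-type counting function: occurrences of `O` on `[x, y]` read forwards minus those
read backwards. -/
noncomputable def phi (G : SimpleGraph V) (O : V → V → Prop) (ℓ : ℕ) (x y : V) : ℤ :=
  (cnt G O ℓ x y : ℤ) - cnt G O ℓ y x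

lemma phi_comm (x y : V) : phi G O ℓ y x = - phi G O ℓ x y := by
  unfold phi; ring

lemma phi_concat (hG : G.IsTree) (hO : ∀ p q, O p q → G.dist p q = ℓ) (hℓ : 0 < ℓ) {x m z : V}
    (hm : G.dist x m + G.dist m z = G.dist x z) :
    |phi G O ℓ x z - phi G O ℓ x m - phi G O ℓ m z| ≤ (ℓ : ℤ) - 1 := by
  have hm' : G.dist z m + G.dist m x = G.dist z x := by
    rw [G.dist_comm (u := z), G.dist_comm (u := m) (v := x), G.dist_comm (u := z) (v := x)]; omega
  have h1 := cnt_add_le hG hm hO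
  have h2 := cnt_le_add hG hm hO
  have h3 := cnt_add_le hG hm' hO
  have h4 := cnt_le_add hG hm' hO
  unfold phi
  rw [abs_le]
  omega

lemma phi_tri (hG : G.IsTree) (hO : ∀ p q, O p q → G.dist p q = ℓ) (hℓ : 0 < ℓ) (x y z : V) :
    |phi G O ℓ x z - phi G O ℓ x y - phi G O ℓ y z| ≤ 3 * ((ℓ : ℤ) - 1) := by
  obtain ⟨m, h1, h2, h3⟩ := median hG x y z
  have a1 := phi_concat hG hO hℓ h1
  have a2 := phi_concat hG hO hℓ h2
  have a3 := phi_concat hG hO hℓ h3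
  have a4 := phi_comm (G := G) (O := O) (ℓ := ℓ) y m
  rw [abs_le] at *
  omega

lemma phi_map (hinv : ∀ g ∈ autfPlus G f, ∀ p q, O p q → O (g p) (g q))
    {g : Equiv.Perm V} (hg : g ∈ autfPlus G f) (x y : V) :
    phi G O ℓ (g x) (g y) = phi G O ℓ x y := by
  unfold phi; rw [cnt_map hinv hg, cnt_map hinv hg]

lemma phi_fix (hG : G.IsTree) (hO : ∀ p q, O p q → G.dist p q = ℓ) (hℓ : 0 < ℓ)
    (hinv : ∀ g ∈ autfPlus G f, ∀ p q, O p q → O (g p) (g q))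
    {g : Equiv.Perm V} (hg : g ∈ autfPlus G f) {p : V} (hp : g p = p) (x : V) :
    |phi G O ℓ x (g x)| ≤ 3 * ((ℓ : ℤ) - 1) := by
  have h1 := phi_tri hG hO hℓ x p (g x)
  have h2 := phi_map (ℓ := ℓ) hinv hg p x
  rw [hp] at h2
  have h3 := phi_comm (G := G) (O := O) (ℓ := ℓ) x p
  rw [abs_le] at *
  omega

lemma phi_mul (hG : G.IsTree) (hO : ∀ p q, O p q → G.dist p q = ℓ) (hℓ : 0 < ℓ)
    (hinv : ∀ g ∈ autfPlus G f, ∀ p q, O p q → O (g p) (g q))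
    {g : Equiv.Perm V} (hg : g ∈ autfPlus G f) (h : Equiv.Perm V) (x : V) :
    |phi G O ℓ x (g (h x)) - phi G O ℓ x (g x) - phi G O ℓ x (h x)| ≤ 3 * ((ℓ : ℤ) - 1) := by
  have h1 := phi_tri hG hO hℓ x (g x) (g (h x))
  rwa [phi_map hinv hg] at h1

/-- For patterns of length one the counting function vanishes on displacements. -/
lemma phi_one (hG : G.IsTree) (hO : ∀ p q, O p q → G.dist p q = 1)
    (hinv : ∀ g ∈ autfPlus G f, ∀ p q, O p q → O (g p) (g q))
    {g : Equiv.Perm V} (hg : g ∈ autfPlus G f) (x : V) : phi G O 1 x (g x) = 0 := by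
  refine plus_induction (P := fun g => ∀ x, phi G O 1 x (g x) = 0) ?_ ?_ ?_ hg x
  · intro g hg y _ _ hy _ x
    have := phi_fix hG hO one_pos hinv hg hy x
    simpa using this
  · intro x; simp [phi]
  · intro g hg h hh h1 h2 x
    have := phi_mul hG hO one_pos hinv hg h x
    rw [h1, h2] at this
    simpa using this

end QuasiMorphism

/-! ### Turns -/

section Turns

variable {G : SimpleGraph V} {f : V → I}

/-- The geodesic `[x, y]` contains a path `p z q` whose first edge is moved to its second one by an
element of `H` fixing `z`. -/
def HasTurn (G : SimpleGraph V) (H : Subgroup (Equiv.Perm V)) (x y : V) : Prop :=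
  ∃ z p q, ∃ h ∈ H, G.Adj z p ∧ G.Adj z q ∧ h z = z ∧ h p = q ∧ p ≠ q ∧
    G.dist x p + 2 + G.dist q y = G.dist x y

/-- The edge from `z` to `p` is moved by the stabilizer of `z` in `H`. -/
def Turny (G : SimpleGraph V) (H : Subgroup (Equiv.Perm V)) (z p : V) : Prop :=
  G.Adj z p ∧ ∃ h ∈ H, h z = z ∧ h p ≠ p

/-- Any two distinct vertices in one orbit are joined by a geodesic with a turn.  The first edge of
`[x, g x]` must reappear with the opposite orientation, by `phi_one`. -/
lemma hasTurn (hG : G.IsTree) {g : Equiv.Perm V} (hg : g ∈ autfPlus G f) {x : V} (hx : g x ≠ x) :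
    HasTurn G (autfPlus G f) x (g x) := by
  induction hn : G.dist x (g x) using Nat.strong_induction_on generalizing x g with
  | _ n ih =>
  obtain ⟨x1, hx1⟩ := step_exists hG hx.symm
  set y := g x with hy
  let O : V → V → Prop := fun p q => ∃ k ∈ autfPlus G f, p = k x ∧ q = k x1
  have hO : ∀ p q, O p q → G.dist p q = 1 := by
    rintro p q ⟨k, hk, rfl, rfl⟩
    rw [plus_dist hk, dist_adj hx1.1]
  have hinv : ∀ g ∈ autfPlus G f, ∀ p q, O p q → O (g p) (g q) := by
    rintro g hg p q ⟨k, hk, rfl, rfl⟩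
    exact ⟨g * k, mul_mem hg hk, rfl, rfl⟩
  have h0 := phi_one hG hO hinv hg x
  have h1 : 0 < cnt G O 1 x y := cnt_pos one_pos (p := x) (q := x1) ⟨1, one_mem _, rfl, rfl⟩ (by
    have := hx1.2; simp; omega)
  have h2 : 0 < cnt G O 1 y x := by
    rw [← hy] at h0
    unfold phi at h0; omega
  obtain ⟨p, q, ⟨k, hk, rfl, rfl⟩, hd⟩ := exists_of_cnt_pos h2
  have hadj := dist_adj ((adj_map hk).2 hx1.1)
  have hx12 := hx1.2
  rw [G.dist_comm (u := y) (v := x), G.dist_comm (u := y), G.dist_comm (u := k x1) (v := x)] at hd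
  have t1 := tri hG x (k x1) (k x)
  have t2 := tri hG x (k x) y
  have t3 := tri hG (k x1) (k x) y
  have t4 := tri hG x (k x1) y
  have hc := G.dist_comm (u := k x1) (v := k x)
  have hxx1 := dist_adj hx1.1
  by_cases hq1 : k x1 = x1
  · rw [hq1] at hd t1 t3 t4 hadj hc
    refine ⟨x1, x, k x, k, hk, hx1.1.symm, ?_, hq1, rfl, ?_, ?_⟩
    · have := (adj_map hk).2 hx1.1.symm
      rwa [hq1] at this
    · intro h
      rw [← h] at hd; omega
    · simp; omega
  have hq0 : k x1 ≠ x := by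
    intro h
    have := even_disp hG hk x1
    rw [h, G.dist_comm, hxx1] at this
    exact absurd this (by decide)
  have hpos := dist_pos hG hq0
  have hcq := G.dist_comm (u := k x1) (v := x)
  have hord := order hG (x := x) (q := x1) (m := k x1) (z := y) (by omega) (by omega) (by omega)
  obtain ⟨z, p, q, h, hh, a1, a2, a3, a4, a5, a6⟩ := ih (G.dist x1 (k x1)) (by omega) hk hq1 rfl
  refine ⟨z, p, q, h, hh, a1, a2, a3, a4, a5, ?_⟩
  have t5 := tri hG x x1 p
  have t6 := tri hG q (k x1) y
  have t7 := tri hG x p y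
  have t8 := tri hG p q y
  have t9 := tri hG p z q
  have := dist_adj a1
  have := dist_adj a2
  have := G.dist_comm (u := p) (v := z)
  omega

lemma hasTurn_of_eq (hG : G.IsTree) {g : Equiv.Perm V} (hg : g ∈ autfPlus G f) {x y : V}
    (hy : g x = y) (hx : x ≠ y) : HasTurn G (autfPlus G f) x y := by
  subst hy; exact hasTurn hG hg hx.symm

lemma HasTurn.turny {H : Subgroup (Equiv.Perm V)} (hG : G.IsTree) {x y : V} (h : HasTurn G H x y) :
    ∃ z p q, ∃ h ∈ H, h z = z ∧ h p = q ∧ p ≠ q ∧ Turny G H z p ∧ Turny G H z q ∧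
      Step G z p x ∧ Step G z q y ∧
      G.dist x z + G.dist z y = G.dist x y := by
  obtain ⟨z, p, q, h, hh, a1, a2, a3, a4, a5, a6⟩ := h
  have t1 := tri hG x z y
  have t2 := tri hG x p z
  have t3 := tri hG z q y
  have d1 := dist_adj a1
  have d2 := dist_adj a2
  have := G.dist_comm (u := p) (v := z)
  have := G.dist_comm (u := p) (v := x)
  have := G.dist_comm (u := z) (v := x)
  refine ⟨z, p, q, h, hh, a3, a4, a5, ⟨a1, h, hh, a3, by rw [a4]; exact a5.symm⟩,
    ⟨a2, h⁻¹, inv_mem hh, ?_, ?_⟩, ⟨a1, by omega⟩, ⟨a2, by omega⟩, by omega⟩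
  · rw [Equiv.Perm.inv_eq_iff_eq, a3]
  · rw [Ne, Equiv.Perm.inv_eq_iff_eq]
    intro e
    exact a5 (h.injective (a4.trans e))

lemma turny_map {g : Equiv.Perm V} (hg : g ∈ autfPlus G f) {z p : V}
    (h : Turny G (autfPlus G f) z p) : Turny G (autfPlus G f) (g z) (g p) := by
  obtain ⟨h1, k, hk, h2, h3⟩ := h
  refine ⟨(adj_map hg).2 h1, g * k * g⁻¹, mul_mem (mul_mem hg hk) (inv_mem hg), by simp [h2], ?_⟩
  simpa using h3

/-- Every half-tree contains a vertex with a stabilizer moving the direction towards the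
complement: otherwise the vertices whose orbit avoids the half-tree form an invariant subtree. -/
lemma exists_turny (hG : G.IsTree) (hsub : NoInvariantSubtree G (autfPlus G f)) {x y : V}
    (hxy : G.Adj x y) :
    ∃ z p, Step G x y z ∧ Step G z p x ∧ Turny G (autfPlus G f) z p := by
  by_contra hcon
  push Not at hcon
  apply hsub
  refine ⟨{t | ∀ h ∈ autfPlus G f, ¬ Step G x y (h t)}, ⟨x, ?_⟩, ?_, ?_, ?_⟩
  · intro h hh hs
    have hne : x ≠ h x := by
      intro e; have := hs.2; rw [← e] at this; simp at this
    obtain ⟨z, p, q, k, hk, a1, a2, a3, a4, a5, a6, a7, a8⟩ := (hasTurn hG hh hne.symm).turny hG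
    have hzx : x ≠ z := by
      rintro rfl; have := a6.2; simp at this
    exact hcon z p (step_restrict hG hs a8 hzx) a6 a4
  · intro h
    have : y ∈ {t | ∀ h ∈ autfPlus G f, ¬ Step G x y (h t)} := by rw [h]; trivial
    exact this 1 (one_mem _) (step_self hxy)
  · intro s hs t ht z hz h hh hstep
    have h1 := (step_iff_not hG hxy.symm (h s)).2 (hs h hh)
    have h2 := (step_iff_not hG hxy.symm (h t)).2 (ht h hh)
    have c1 := cross hG hstep h1
    have c2 := cross hG hstep h2
    have e1 := plus_dist hh s z
    have e2 := plus_dist hh z t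
    have e3 := plus_dist hh s t
    unfold OnGeodesic at hz
    have t1 := tri hG (h s) x (h t)
    have : G.dist x (h z) ≠ 0 := by
      intro h0
      have := hstep.2; omega
    have := G.dist_comm (u := h z) (v := h t)
    have := G.dist_comm (u := x) (v := h t)
    omega
  · intro g hg
    ext t
    constructor
    · rintro ⟨s, hs, rfl⟩ h hh
      exact hs (h * g) (mul_mem hh hg)
    · intro ht
      refine ⟨g⁻¹ t, fun h hh => ?_, by simp⟩
      exact ht (h * g⁻¹) (mul_mem hh (inv_mem hg))

end Turns

/-! ### Turning vertices branch -/

section ThirdNeighbor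

variable {G : SimpleGraph V} {f : V → I}

lemma orbit_not_adj (hG : G.IsTree) {v : V} {h k : Equiv.Perm V} (hh : h ∈ autfPlus G f)
    (hk : k ∈ autfPlus G f) : ¬ G.Adj (h v) (k v) := by
  intro hadj
  have := even_disp hG (mul_mem hk (inv_mem hh)) (h v)
  rw [show (k * h⁻¹) (h v) = k v by simp, dist_adj hadj] at this
  exact absurd this (by decide)

/-- Counting the points of a set `S` on a geodesic with endpoints outside `S` is symmetric. -/
lemma cnt_diag_symm (hG : G.IsTree) {S : V → Prop} {x y : V} (hx : ¬ S x) (hy : ¬ S y) :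
    cnt G (fun p q => S p ∧ p = q) 0 x y = cnt G (fun p q => S p ∧ p = q) 0 y x := by
  have key : ∀ x y, ¬ S x → ¬ S y →
      cnt G (fun p q => S p ∧ p = q) 0 x y ≤ cnt G (fun p q => S p ∧ p = q) 0 y x := by
    classical
    intro x y hx hy
    unfold cnt
    apply Finset.card_le_card_of_injOn (fun i => G.dist x y - i)
    · intro i hi
      simp only [Finset.coe_filter, Finset.mem_range, Set.mem_ofPred_eq] at hi ⊢
      obtain ⟨h1, p, q, ⟨h2, rfl⟩, h3, h4⟩ := hi
      have h5 : p ≠ x := by rintro rfl; exact hx h2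
      have := dist_pos hG h5
      rw [G.dist_comm (u := p) (v := x)] at this
      rw [G.dist_comm (u := y) (v := x)]
      refine ⟨by omega, p, p, ⟨h2, rfl⟩, ?_, ?_⟩ <;>
      · rw [G.dist_comm (u := y) (v := p)]
        try rw [G.dist_comm (u := p) (v := x), G.dist_comm (u := y) (v := x)]
        omega
    · intro i hi j hj hij
      simp only [Finset.coe_filter, Finset.mem_range, Set.mem_ofPred_eq] at hi hj hij
      omega
  exact le_antisymm (key x y hx hy) (key y x hy hx)

/-- A vertex with a turn has a third neighbor.  Otherwise the number of points of its orbit on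
`[x, g x]` would be even for every `g`, whereas it is `1` for the two neighbors being exchanged. -/
lemma third_neighbor (hG : G.IsTree) {v w : V} {R : Equiv.Perm V} (hR : R ∈ autfPlus G f)
    (hv : R v = v) (hw : R w ≠ w) (hvw : G.Adj v w) : ∃ u, G.Adj v u ∧ u ≠ w ∧ u ≠ R w := by
  by_contra hcon
  push Not at hcon
  have hnb : ∀ u, G.Adj v u → u = w ∨ u = R w := fun u hu => by
    by_cases h : u = w
    · exact Or.inl h
    · exact Or.inr (hcon u hu h)
  let S : V → Prop := fun s => ∃ h ∈ autfPlus G f, s = h v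
  let O : V → V → Prop := fun p q => S p ∧ p = q
  have hO : ∀ p q, O p q → G.dist p q = 0 := by
    rintro p q ⟨_, rfl⟩; simp
  have hSinv : ∀ g ∈ autfPlus G f, ∀ p, S p → S (g p) := by
    rintro g hg p ⟨k, hk, rfl⟩
    exact ⟨g * k, mul_mem hg hk, rfl⟩
  have hSinv' : ∀ g ∈ autfPlus G f, ∀ p, ¬ S p → ¬ S (g p) := by
    intro g hg p hp h
    apply hp
    have := hSinv g⁻¹ (inv_mem hg) _ h
    simpa using this
  have hinv : ∀ g ∈ autfPlus G f, ∀ p q, O p q → O (g p) (g q) := by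
    rintro g hg p q ⟨h, rfl⟩
    exact ⟨hSinv g hg p h, rfl⟩
  have hSadj : ∀ p q, S p → S q → ¬ G.Adj p q := by
    rintro p q ⟨h, hh, rfl⟩ ⟨k, hk, rfl⟩
    exact orbit_not_adj hG hh hk
  -- points of `S` have only two neighbors, so they are not branching points of a tripod
  have hmed : ∀ x y z m, ¬ S x → ¬ S y → ¬ S z → G.dist x m + G.dist m y = G.dist x y →
      G.dist y m + G.dist m z = G.dist y z → G.dist x m + G.dist m z = G.dist x z → ¬ S m := by
    rintro x y z m hx hy hz h1 h2 h3 ⟨k, hk, rfl⟩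
    have hS : S (k v) := ⟨k, hk, rfl⟩
    obtain ⟨a, ha⟩ := step_exists hG (show k v ≠ x by rintro rfl; exact hx hS)
    obtain ⟨b, hb⟩ := step_exists hG (show k v ≠ y by rintro rfl; exact hy hS)
    obtain ⟨c, hc⟩ := step_exists hG (show k v ≠ z by rintro rfl; exact hz hS)
    have hdiff : ∀ x y a b, G.dist x (k v) + G.dist (k v) y = G.dist x y → Step G (k v) a x →
        Step G (k v) b y → a ≠ b := by
      rintro x y a b h ha hb rfl
      have := ha.2; have := hb.2
      have := tri hG x a y
      have := G.dist_comm (u := x) (v := a)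
      have := G.dist_comm (u := x) (v := k v)
      omega
    have e1 := hdiff x y a b h1 ha hb
    have e2 := hdiff y z b c h2 hb hc
    have e3 := hdiff x z a c h3 ha hc
    have hnb' : ∀ u, G.Adj (k v) u → u = k w ∨ u = k (R w) := by
      intro u hu
      have : G.Adj v (k⁻¹ u) := by
        rw [← adj_map hk]; simpa using hu
      rcases hnb _ this with h | h
      · left; rw [← h]; simp
      · right; rw [← h]; simp
    rcases hnb' a ha.1 with r1 | r1 <;> rcases hnb' b hb.1 with r2 | r2 <;>
      rcases hnb' c hc.1 with r3 | r3 <;> simp_all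
  have hsym : ∀ x y, ¬ S x → ¬ S y → cnt G O 0 x y = cnt G O 0 y x :=
    fun x y hx hy => cnt_diag_symm hG hx hy
  have hadd : ∀ x m z, G.dist x m + G.dist m z = G.dist x z →
      cnt G O 0 x z = cnt G O 0 x m + cnt G O 0 m z := by
    intro x m z hm
    have h1 := cnt_add_le hG hm hO
    have h2 := cnt_le_add hG hm hO
    omega
  have hev : ∀ x y z, ¬ S x → ¬ S y → ¬ S z →
      (cnt G O 0 x y + cnt G O 0 y z + cnt G O 0 x z) % 2 = 0 := by
    intro x y z hx hy hz
    obtain ⟨m, h1, h2, h3⟩ := median hG x y z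
    have hm := hmed x y z m hx hy hz h1 h2 h3
    have := hadd _ _ _ h1; have := hadd _ _ _ h2; have := hadd _ _ _ h3
    have := hsym y m hy hm
    omega
  have main : ∀ g ∈ autfPlus G f, ∀ x, ¬ S x → cnt G O 0 x (g x) % 2 = 0 := by
    intro g hg
    refine plus_induction (P := fun g => ∀ x, ¬ S x → cnt G O 0 x (g x) % 2 = 0) ?_ ?_ ?_ hg
    · intro g hg a b hab ha hb x hx
      obtain ⟨p, hp, hpS⟩ : ∃ p, g p = p ∧ ¬ S p := by
        by_cases h : S a
        · exact ⟨b, hb, fun h' => hSadj a b h h' hab⟩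
        · exact ⟨a, ha, h⟩
      have h1 := hev x p (g x) hx hpS (hSinv' g hg x hx)
      have h2 := cnt_map (ℓ := 0) hinv hg p x
      rw [hp] at h2
      rw [h2, hsym p x hpS hx] at h1
      omega
    · intro x hx
      have := hadd x x x (by simp)
      change cnt G O 0 x x % 2 = 0
      omega
    · intro g hg h hh h1 h2 x hx
      have h3 := hev x (g x) (g (h x)) hx (hSinv' g hg x hx) (hSinv' g hg _ (hSinv' h hh x hx))
      rw [cnt_map hinv hg] at h3
      have := h1 x hx; have := h2 x hx
      change cnt G O 0 x (g (h x)) % 2 = 0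
      omega
  have hSv : S v := ⟨1, one_mem _, rfl⟩
  have hSw : ¬ S w := fun h => hSadj v w hSv h hvw
  have h1 := main R hR w hSw
  have hvRw : G.Adj v (R w) := by rw [← adj_map hR, hv] at hvw; exact hvw
  have hd : G.dist w v + G.dist v (R w) = G.dist w (R w) := by
    apply concat hG
    intro s hs hs'
    have e1 := step_unique hG hs (step_self hvw)
    have e2 := step_unique hG hs' (step_self hvRw)
    exact hw (e2.symm.trans e1)
  have h2 := hadd w v (R w) hd
  have h3 : cnt G O 0 w v = 0 := by
    by_contra hne
    classical
    unfold cnt at hne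
    obtain ⟨i, hi⟩ := Finset.card_pos.1 (Nat.pos_of_ne_zero hne)
    simp only [Finset.mem_filter, Finset.mem_range] at hi
    obtain ⟨h1, p, q, ⟨h2, rfl⟩, h3, h4⟩ := hi
    rw [G.dist_comm (u := w) (v := v), dist_adj hvw] at h1
    have : w = p := dist_zero hG (by omega)
    exact hSw (this ▸ h2)
  have h4 : cnt G O 0 v (R w) = 1 := by
    classical
    unfold cnt
    rw [dist_adj hvRw, Finset.card_eq_one]
    refine ⟨0, ?_⟩
    ext i
    simp only [Finset.mem_filter, Finset.mem_range, Finset.mem_singleton]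
    constructor
    · rintro ⟨h, _⟩; omega
    · rintro rfl
      exact ⟨one_pos, v, v, ⟨hSv, rfl⟩, by simp, by simp⟩
  omega

end ThirdNeighbor

/-! ### Bounded simplicity bounds the quasimorphisms -/

section Bounded

variable {G : SimpleGraph V} {f : V → I}

lemma exists_edge_fixer (hnt : autfPlus G f ≠ ⊥) :
    ∃ g ∈ autfPlus G f, g ≠ 1 ∧ ∃ x y, G.Adj x y ∧ g x = x ∧ g y = y := by
  by_contra hcon
  push Not at hcon
  apply hnt
  rw [autfPlus, plusGroup, Subgroup.closure_eq_bot_iff]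
  rintro g ⟨h1, x, y, h2, h3, h4⟩
  by_contra hne
  exact hcon g (mem_plus_of_fix h1 h2 h3 h4) hne x y h2 h3 h4

/-- In a boundedly simple group every counting function is bounded on displacements, since every
element is a product of boundedly many elements with a fixed vertex. -/
lemma phi_bounded (hG : G.IsTree) (hbs : IsBoundedlySimple ↥(autfPlus G f))
    (hnt : autfPlus G f ≠ ⊥) {O : V → V → Prop} {ℓ : ℕ}
    (hO : ∀ p q, O p q → G.dist p q = ℓ) (hℓ : 0 < ℓ)
    (hinv : ∀ g ∈ autfPlus G f, ∀ p q, O p q → O (g p) (g q)) :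
    ∃ C : ℤ, ∀ h ∈ autfPlus G f, ∀ x, |phi G O ℓ x (h x)| ≤ C := by
  obtain ⟨N, hN⟩ := hbs
  obtain ⟨g, hg, hg1, a, b, hab, ha, hb⟩ := exists_edge_fixer hnt
  have hl1 : (1 : ℤ) ≤ ℓ := by exact_mod_cast hℓ
  refine ⟨N * (6 * ((ℓ : ℤ) - 1)), fun h hh x => ?_⟩
  have h0 : phi G O ℓ x x = 0 := by simp [phi]
  by_cases hh1 : h = 1
  · subst hh1
    rw [Equiv.Perm.one_apply, h0, abs_zero]
    have : (0 : ℤ) ≤ N := by positivity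
    exact mul_nonneg this (by linarith)
  obtain ⟨l, hl, hconj, hprod⟩ := hN ⟨g, hg⟩ ⟨h, hh⟩ (fun e => hg1 (congrArg Subtype.val e))
    (fun e => hh1 (congrArg Subtype.val e))
  have key : ∀ l : List ↥(autfPlus G f),
      (∀ y ∈ l, ∃ c : ↥(autfPlus G f), y = c * ⟨g, hg⟩ * c⁻¹ ∨ y = c * (⟨g, hg⟩)⁻¹ * c⁻¹) →
      |phi G O ℓ x ((l.prod : Equiv.Perm V) x)| ≤ l.length * (6 * ((ℓ : ℤ) - 1)) := by
    intro l
    induction l with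
    | nil => intro _; simp [h0]
    | cons y l ih =>
      intro hy
      have h1 := ih (fun y hy' => hy y (List.mem_cons_of_mem _ hy'))
      obtain ⟨c, hc⟩ := hy y List.mem_cons_self
      have hfix : (y : Equiv.Perm V) ((c : Equiv.Perm V) a) = (c : Equiv.Perm V) a := by
        rcases hc with rfl | rfl
        · simp [ha]
        · have : g.symm a = a := by rw [Equiv.symm_apply_eq, ha]
          simp [this]
      have h2 := phi_fix hG hO hℓ hinv y.2 hfix x
      have h3 := phi_mul hG hO hℓ hinv y.2 (l.prod : Equiv.Perm V) x
      rw [List.prod_cons, List.length_cons]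
      change |phi G O ℓ x ((y : Equiv.Perm V) ((l.prod : Equiv.Perm V) x))| ≤ _
      rw [Nat.cast_add, Nat.cast_one]
      rw [abs_le] at *
      constructor <;> nlinarith
  have := key l hconj
  rw [hprod] at this
  refine this.trans ?_
  have : (l.length : ℤ) ≤ N := by exact_mod_cast hl
  exact mul_le_mul_of_nonneg_right this (by linarith)

end Bounded

/-! ### An unbounded quasimorphism -/

section Words

variable {G : SimpleGraph V} {f : V → I}

/-- An automorphism turning at `a` concatenates `[v, a]` with its image to a geodesic. -/
lemma turn_concat (hG : G.IsTree) {B : Equiv.Perm V} (hB : B ∈ autf G f) {v a a' : V}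
    (ha : Step G a a' v) (hBa : B a = a) (hBa' : B a' ≠ a') :
    G.dist v a + G.dist a (B v) = G.dist v (B v) := by
  apply concat hG
  intro s hs hs'
  rw [step_unique hG hs ha] at hs'
  have h1 : Step G a (B a') (B v) := by
    have := (step_map hB).2 ha
    rwa [hBa] at this
  exact hBa' (step_unique hG h1 hs')

lemma turn_fold (hG : G.IsTree) {B : Equiv.Perm V} (hB : B ∈ autf G f) {v a a' u : V}
    (ha : Step G a a' v) (hBa : B a = a) (hBa' : B a' ≠ a')
    (hu : G.dist v u + G.dist u (B v) = G.dist v (B v)) :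
    G.dist v u + G.dist u a = G.dist v a ∨
      G.dist v (B⁻¹ u) + G.dist (B⁻¹ u) a = G.dist v a := by
  have h1 := turn_concat hG hB ha hBa hBa'
  rcases le_total (G.dist v u) (G.dist v a) with h | h
  · exact Or.inl (order hG hu h1 h)
  · right
    have h2 := order hG h1 hu h
    have e1 := aut_dist hB v (B⁻¹ u)
    have e2 := aut_dist hB (B⁻¹ u) a
    have e3 := aut_dist hB a v
    have ep : B (B⁻¹ u) = u := by simp
    rw [ep] at e1 e2
    rw [hBa] at e2 e3
    have := G.dist_comm (u := B v) (v := u)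
    have := G.dist_comm (u := a) (v := v)
    have := G.dist_comm (u := a) (v := u)
    omega

/-- The product `e 0 * e 1 * ⋯ * e (n - 1)`. -/
def pw (e : ℕ → Equiv.Perm V) : ℕ → Equiv.Perm V
  | 0 => 1
  | n + 1 => pw e n * e n

lemma pw_mem {H : Subgroup (Equiv.Perm V)} {e : ℕ → Equiv.Perm V} (he : ∀ i, e i ∈ H) (n : ℕ) :
    pw e n ∈ H := by
  induction n with
  | zero => exact one_mem _
  | succ n ih => exact mul_mem ih (he n)

/-- Ping-pong: if all letters leave `v` in direction `w` and arrive in another direction `w'`, the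
orbit points `pw e n v` lie in this order on geodesics. -/
lemma chain_add (hG : G.IsTree) {e : ℕ → Equiv.Perm V} (he : ∀ i, e i ∈ autfPlus G f)
    {v w w' : V} (hww : w ≠ w') (h1 : ∀ i, Step G v w (e i v))
    (h2 : ∀ i, Step G v w' ((e i)⁻¹ v)) (n : ℕ) :
    G.dist v (pw e n v) + G.dist (pw e n v) (pw e (n + 1) v) = G.dist v (pw e (n + 1) v) := by
  have hfwd : ∀ n, Step G (pw e n v) (pw e n w) (pw e (n + 1) v) := fun n =>
    (step_map_plus (pw_mem he n)).2 (h1 n)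
  have hback : ∀ n, Step G (pw e (n + 1) v) (pw e (n + 1) w') (pw e n v) := fun n => by
    have := (step_map_plus (pw_mem he (n + 1))).2 (h2 n)
    rwa [show pw e (n + 1) ((e n)⁻¹ v) = pw e n v by simp [pw]] at this
  induction n with
  | zero => simp [pw]
  | succ n ih =>
    apply concat hG
    intro s hs hs'
    have h3 : Step G (pw e (n + 1) v) (pw e (n + 1) w') v := by
      apply step_extend hG (hback n)
      rw [G.dist_comm (u := pw e (n + 1) v), G.dist_comm (u := pw e n v) (v := v),
        G.dist_comm (u := pw e (n + 1) v)]
      omega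
    have e1 := step_unique hG hs h3
    have e2 := step_unique hG hs' (hfwd (n + 1))
    exact hww ((pw e (n + 1)).injective (e2.symm.trans e1))

lemma chain_point (hG : G.IsTree) {e : ℕ → Equiv.Perm V} (he : ∀ i, e i ∈ autfPlus G f)
    {v w w' : V} (hww : w ≠ w') (h1 : ∀ i, Step G v w (e i v))
    (h2 : ∀ i, Step G v w' ((e i)⁻¹ v)) {n : ℕ} (hn : 0 < n) {u : V}
    (hu : G.dist v u + G.dist u (pw e n v) = G.dist v (pw e n v)) :
    ∃ i < n, G.dist v u = G.dist v (pw e i v) + G.dist (pw e i v) u ∧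
      G.dist (pw e i v) u + G.dist u (pw e (i + 1) v) =
        G.dist (pw e i v) (pw e (i + 1) v) := by
  induction n with
  | zero => omega
  | succ n ih =>
    have h3 := chain_add hG he hww h1 h2 n
    rcases le_or_gt (G.dist v (pw e n v)) (G.dist v u) with h | h
    · have := order hG h3 hu h
      exact ⟨n, by omega, by omega, by omega⟩
    · have h4 := order hG hu h3 h.le
      have hn0 : 0 < n := by
        rcases Nat.eq_zero_or_pos n with rfl | h'
        · simp [pw] at h
        · exact h'
      obtain ⟨i, hi, h5, h6⟩ := ih hn0 h4
      exact ⟨i, by omega, h5, h6⟩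

/-- The positions of the letter `γ` in the periodic word `γγβγββγγβγββ⋯`. -/
def Gam (n : ℕ) : Prop := n % 6 = 0 ∨ n % 6 = 1 ∨ n % 6 = 3

instance : DecidablePred Gam := fun n => by unfold Gam; infer_instance

/-- The periodic word `γγβγββ⋯`. -/
def word (γ β : Equiv.Perm V) (n : ℕ) : Equiv.Perm V := if Gam n then γ else β

lemma word_add (γ β : Equiv.Perm V) (j i : ℕ) : word γ β (6 * j + i) = word γ β i := by
  have : Gam (6 * j + i) ↔ Gam i := by
    unfold Gam; rw [show (6 * j + i) % 6 = i % 6 by omega]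
  simp only [word, this]

lemma pw_word_add (γ β : Equiv.Perm V) (j i : ℕ) :
    pw (word γ β) (6 * j + i) = pw (word γ β) (6 * j) * pw (word γ β) i := by
  induction i with
  | zero => simp [pw]
  | succ i ih =>
    rw [← add_assoc, pw, ih, word_add, pw, mul_assoc]

/-- In the word `γγβγββ⋯` with lengths `2 L ≥ 2 k` of `γ`, `β`, there are no three letters `γ` with
gaps `2 L + 2 k` and `2 L`. -/
lemma word_gap {D : ℕ → ℕ} {k L : ℕ} (hk0 : 0 < k) (hle : k ≤ L)
    (hD : ∀ i, D (i + 1) = D i + if Gam i then 2 * L else 2 * k) {i1 i2 i3 : ℕ}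
    (hi1 : Gam i1) (hi2 : Gam i2) (hi3 : Gam i3) (h12 : D i2 = D i1 + (2 * L + 2 * k))
    (h23 : D i3 = D i2 + 2 * L) : False := by
  have hmono : Monotone D := monotone_nat_of_le_succ fun i => by rw [hD]; omega
  have hstep : ∀ i, D i + 2 * k ≤ D (i + 1) := by
    intro i; rw [hD]; split_ifs <;> omega
  have hup : ∀ i, D (i + 1) ≤ D i + 2 * L := by
    intro i; rw [hD]; split_ifs <;> omega
  have u1 := hD i1
  rw [if_pos hi1] at u1
  have u2 := hD i2
  rw [if_pos hi2] at u2
  have e3 : i3 = i2 + 1 := by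
    rcases lt_trichotomy i3 (i2 + 1) with h | h | h
    · have := hmono (show i3 ≤ i2 by omega); omega
    · exact h
    · have := hmono (show i2 + 1 + 1 ≤ i3 by omega)
      have := hstep (i2 + 1); omega
  have e2 : i2 = i1 + 2 := by
    rcases lt_trichotomy i2 (i1 + 2) with h | h | h
    · have := hmono (show i2 ≤ i1 + 1 by omega); omega
    · exact h
    · have := hmono (show i1 + 1 + 1 + 1 ≤ i2 by omega)
      have := hstep (i1 + 1); have := hstep (i1 + 1 + 1); omega
  subst e3; subst e2
  unfold Gam at hi1 hi2 hi3
  omega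

set_option maxHeartbeats 1600000 in
/-- If a turn at `b` can be seen from `v` in the same direction `w` as a turn at `a`, where `[v, a]`
avoids the orbit of `b` and `[v, b]` meets it only in `b`, then the group is not boundedly simple.
With `γ = C * R` and `β = B * R`, translates of the segment from `b` to `γγβ b` occur in every
period along the axis of `γγβγββ`, but never backwards, so the counting function of this segment is
unbounded. -/
lemma no_word (hG : G.IsTree) (hbs : IsBoundedlySimple ↥(autfPlus G f))
    (hnt : autfPlus G f ≠ ⊥) {v w a a' b b' : V} {R B C : Equiv.Perm V}
    (hR : R ∈ autfPlus G f) (hB : B ∈ autfPlus G f) (hC : C ∈ autfPlus G f)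
    (hRv : R v = v) (hRw : R w ≠ w) (hBa : B a = a) (hBa' : B a' ≠ a')
    (hCb : C b = b) (hCb' : C b' ≠ b')
    (hva : Step G v w a) (hvb : Step G v w b) (hav : Step G a a' v) (hbv : Step G b b' v)
    (hle : G.dist v a ≤ G.dist v b)
    (hma : ∀ h ∈ autfPlus G f, G.dist v (h b) + G.dist (h b) a ≠ G.dist v a)
    (hmb : ∀ h ∈ autfPlus G f, G.dist v (h b) + G.dist (h b) b = G.dist v b → h b = b) :
    False := by
  set k := G.dist v a with hk
  set L := G.dist v b with hL
  have hk0 : 0 < k := by have := hva.2; omega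
  let e := word (C * R) (B * R)
  have he : ∀ i, e i ∈ autfPlus G f := by
    intro i
    change (if Gam i then C * R else B * R) ∈ _
    split_ifs
    · exact mul_mem hC hR
    · exact mul_mem hB hR
  have hev : ∀ i, e i v = if Gam i then C v else B v := by
    intro i
    change (if Gam i then C * R else B * R) v = _
    split_ifs <;> simp [hRv]
  have inv_turn : ∀ {B : Equiv.Perm V} {a a' : V}, B a = a → B a' ≠ a' →
      B⁻¹ a = a ∧ B⁻¹ a' ≠ a' := by
    intro B a a' h1 h2
    refine ⟨by rw [Equiv.Perm.inv_eq_iff_eq, h1], ?_⟩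
    rw [Ne, Equiv.Perm.inv_eq_iff_eq]
    exact fun h => h2 h.symm
  have tB := turn_concat hG (plus_le hB) hav hBa hBa'
  have tC := turn_concat hG (plus_le hC) hbv hCb hCb'
  have lenB : G.dist v (B v) = 2 * k := by
    have := plus_dist hB a v
    rw [hBa] at this
    have := G.dist_comm (u := a) (v := v)
    omega
  have lenC : G.dist v (C v) = 2 * L := by
    have := plus_dist hC b v
    rw [hCb] at this
    have := G.dist_comm (u := b) (v := v)
    omega
  have h1 : ∀ i, Step G v w (e i v) := by
    intro i
    rw [hev]
    split_ifs
    · exact step_extend hG hvb tC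
    · exact step_extend hG hva tB
  have hRiv : R⁻¹ v = v := by rw [Equiv.Perm.inv_eq_iff_eq, hRv]
  have hww : w ≠ R⁻¹ w := by
    intro h; rw [eq_comm, Equiv.Perm.inv_eq_iff_eq] at h; exact hRw h.symm
  have h2 : ∀ i, Step G v (R⁻¹ w) ((e i)⁻¹ v) := by
    intro i
    have key : ∀ {B : Equiv.Perm V} {a a' : V}, B ∈ autfPlus G f → Step G v w a → Step G a a' v →
        B a = a → B a' ≠ a' → Step G v (R⁻¹ w) ((B * R)⁻¹ v) := by
      intro B a a' hB hva hav h1 h2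
      obtain ⟨h3, h4⟩ := inv_turn h1 h2
      have h5 := step_extend hG hva (turn_concat hG (plus_le (inv_mem hB)) hav h3 h4)
      have h6 := (step_map_plus (inv_mem hR)).2 h5
      rw [hRiv] at h6
      rwa [mul_inv_rev, Equiv.Perm.mul_apply]
    change Step G v (R⁻¹ w) ((if Gam i then C * R else B * R)⁻¹ v)
    split_ifs
    · exact key hC hvb hbv hCb hCb'
    · exact key hB hva hav hBa hBa'
  have hseg : ∀ i, G.dist (pw e i v) (pw e (i + 1) v) = if Gam i then 2 * L else 2 * k := by
    intro i
    change G.dist (pw e i v) (pw e i (e i v)) = _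
    rw [plus_dist (pw_mem he i), hev]
    split_ifs
    · exact lenC
    · exact lenB
  have hD : ∀ i, G.dist v (pw e (i + 1) v) =
      G.dist v (pw e i v) + if Gam i then 2 * L else 2 * k := by
    intro i
    rw [← hseg]; exact (chain_add hG he hww h1 h2 i).symm
  have hD0 : G.dist v (pw e 0 v) = 0 := by simp [pw]
  -- the orbit of `b` meets the chain only in the middle of the letters `γ`
  have hmark : ∀ n, 0 < n → ∀ h ∈ autfPlus G f,
      G.dist v (h b) + G.dist (h b) (pw e n v) = G.dist v (pw e n v) →
      ∃ i < n, Gam i ∧ G.dist v (h b) = G.dist v (pw e i v) + L := by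
    intro n hn h hh hu
    obtain ⟨i, hi, h3, h4⟩ := chain_point hG he hww h1 h2 hn hu
    set g := (pw e i)⁻¹ * h with hg
    have hgm : g ∈ autfPlus G f := mul_mem (inv_mem (pw_mem he i)) hh
    have hgb : pw e i (g b) = h b := by simp [hg]
    have h5 : G.dist v (g b) + G.dist (g b) (e i v) = G.dist v (e i v) := by
      rw [← hgb] at h4
      change _ + G.dist _ (pw e i (e i v)) = G.dist _ (pw e i (e i v)) at h4
      rwa [plus_dist (pw_mem he i), plus_dist (pw_mem he i), plus_dist (pw_mem he i)] at h4
    have h6 : G.dist (pw e i v) (h b) = G.dist v (g b) := by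
      rw [← hgb, plus_dist (pw_mem he i)]
    rw [hev] at h5
    refine ⟨i, hi, ?_⟩
    split_ifs at h5 with hGam
    · refine ⟨hGam, ?_⟩
      have : g b = b := by
        rcases turn_fold hG (plus_le hC) hbv hCb hCb' h5 with h | h
        · exact hmb g hgm h
        · have := hmb (C⁻¹ * g) (mul_mem (inv_mem hC) hgm) h
          rw [Equiv.Perm.mul_apply, Equiv.Perm.inv_eq_iff_eq, hCb] at this
          exact this
      rw [h3, h6, this]
    · exfalso
      rcases turn_fold hG (plus_le hB) hav hBa hBa' h5 with h | h
      · exact hma g hgm h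
      · exact hma (B⁻¹ * g) (mul_mem (inv_mem hB) hgm) h
  let O : V → V → Prop := fun p q => ∃ g ∈ autfPlus G f, p = g b ∧ q = g (pw e 3 b)
  have hinv : ∀ g ∈ autfPlus G f, ∀ p q, O p q → O (g p) (g q) := by
    rintro g hg p q ⟨k, hk, rfl, rfl⟩
    exact ⟨g * k, mul_mem hg hk, rfl, rfl⟩
  -- location of the points `pw e i b` on the chain for the letters `γ`
  have hloc : ∀ i, Gam i → G.dist (pw e i v) (pw e i b) = L ∧
      G.dist (pw e i b) (pw e (i + 1) v) = L := by
    intro i hi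
    change _ ∧ G.dist (pw e i b) (pw e i (e i v)) = L
    rw [plus_dist (pw_mem he i), plus_dist (pw_mem he i), hev, if_pos hi]
    exact ⟨rfl, by omega⟩
  have g0 : Gam 0 := by decide
  have g1 : Gam 1 := by decide
  have g2 : ¬ Gam 2 := by decide
  have g3 : Gam 3 := by decide
  have g4 : ¬ Gam 4 := by decide
  have g5 : ¬ Gam 5 := by decide
  have l0 := hloc 0 g0
  have l1 := hloc 1 g1
  have l3 := hloc 3 g3
  have pb : pw e 0 b = b := by simp [pw]
  have pv : pw e 0 v = v := by simp [pw]
  have d0 := hD 0; have d1 := hD 1; have d2 := hD 2; have d3 := hD 3; have d4 := hD 4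
  have d5 := hD 5
  have s0 := hseg 0; have s1 := hseg 1; have s2 := hseg 2; have s3 := hseg 3; have s4 := hseg 4
  have s5 := hseg 5
  simp only [zero_add, Nat.reduceAdd] at d0 d1 d2 d3 d4 d5 s0 s1 s2 s3 s4 s5 l0 l1 l3
  rw [if_pos g0] at d0 s0
  rw [if_pos g1] at d1 s1
  rw [if_neg g2] at d2 s2
  rw [if_pos g3] at d3 s3
  rw [if_neg g4] at d4 s4
  rw [if_neg g5] at d5 s5
  rw [pb, pv] at l0
  rw [pv] at s0
  have b01 : G.dist b (pw e 1 b) = 2 * L := by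
    have := tri hG b (pw e 1 v) (pw e 1 b)
    have := tri hG v b (pw e 2 v)
    have := tri hG b (pw e 1 b) (pw e 2 v)
    omega
  have b13 : G.dist (pw e 1 b) (pw e 3 b) = 2 * L + 2 * k := by
    have := tri hG (pw e 1 b) (pw e 2 v) (pw e 3 b)
    have := tri hG (pw e 2 v) (pw e 3 v) (pw e 3 b)
    have := tri hG v (pw e 1 v) (pw e 1 b)
    have := tri hG v (pw e 1 b) (pw e 4 v)
    have := tri hG (pw e 1 b) (pw e 3 b) (pw e 4 v)
    omega
  have b03 : G.dist b (pw e 3 b) = 4 * L + 2 * k := by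
    have := tri hG b (pw e 1 b) (pw e 3 b)
    have := tri hG v b (pw e 4 v)
    have := tri hG b (pw e 3 b) (pw e 4 v)
    omega
  have hO : ∀ p q, O p q → G.dist p q = 4 * L + 2 * k := by
    rintro p q ⟨g, hg, rfl, rfl⟩
    rw [plus_dist hg, b03]
  obtain ⟨c, hc⟩ := phi_bounded hG hbs hnt hO (by omega) hinv
  have hfirst : 1 ≤ cnt G O (4 * L + 2 * k) v (pw e 6 v) := by
    apply cnt_pos (by omega) (p := b) (q := pw e 3 b) ⟨1, one_mem _, rfl, rfl⟩
    have := tri hG (pw e 3 b) (pw e 4 v) (pw e 6 v)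
    have := tri hG (pw e 4 v) (pw e 5 v) (pw e 6 v)
    have := tri hG v (pw e 3 b) (pw e 6 v)
    have := tri hG v b (pw e 3 b)
    omega
  have hlow : ∀ j, j ≤ cnt G O (4 * L + 2 * k) v (pw e (6 * j) v) := by
    intro j
    induction j with
    | zero => exact Nat.zero_le _
    | succ j ih =>
      have hmulv : pw e (6 * (j + 1)) v = pw e (6 * j) (pw e 6 v) := by
        rw [mul_add, mul_one, pw_word_add]; rfl
      have hdist : G.dist v (pw e (6 * j) v) + G.dist (pw e (6 * j) v) (pw e (6 * (j + 1)) v) =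
          G.dist v (pw e (6 * (j + 1)) v) := by
        have q : ∀ i, Gam (6 * j + i) ↔ Gam i := fun i => by
          unfold Gam; rw [show (6 * j + i) % 6 = i % 6 by omega]
        have r0 := hD (6 * j + 0); have r1 := hD (6 * j + 1); have r2 := hD (6 * j + 2)
        have r3 := hD (6 * j + 3); have r4 := hD (6 * j + 4); have r5 := hD (6 * j + 5)
        simp only [q, if_pos g0, if_pos g1, if_neg g2, if_pos g3, if_neg g4, if_neg g5, add_assoc,
          zero_add, Nat.reduceAdd] at r0 r1 r2 r3 r4 r5
        rw [hmulv, plus_dist (pw_mem he _), ← hmulv, mul_add, mul_one]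
        rw [add_zero] at r0
        omega
      have := cnt_add_le hG hdist hO
      rw [hmulv, cnt_map hinv (pw_mem he _), ← hmulv] at this
      omega
  have hzero : ∀ n, cnt G O (4 * L + 2 * k) (pw e n v) v = 0 := by
    intro n
    by_contra hne
    obtain ⟨p, q, ⟨g, hg, rfl, rfl⟩, hd⟩ := exists_of_cnt_pos (Nat.pos_of_ne_zero hne)
    clear hlow hfirst d0 d1 d2 d3 d4 d5 s0 s1 s2 s3 s4 s5 l0 l1 l3 lenB lenC tB tC b03 hc
    have hn : 0 < n := by
      rcases Nat.eq_zero_or_pos n with rfl | h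
      · rw [pv] at hd; simp at hd; omega
      · exact h
    -- three consecutive marks, with gaps `2 L + 2 k` and `2 L`
    set m1 := g (pw e 3 b) with hm1
    set m2 := g (pw e 1 b) with hm2
    set m3 := g b with hm3
    have a12 : G.dist m1 m2 = 2 * L + 2 * k := by rw [hm1, hm2, plus_dist hg, G.dist_comm, b13]
    have a23 : G.dist m2 m3 = 2 * L := by rw [hm2, hm3, plus_dist hg, G.dist_comm, b01]
    rw [G.dist_comm (u := pw e n v) (v := v), G.dist_comm (u := pw e n v), G.dist_comm (v := v)]
      at hd
    have t1 := tri hG v m1 m2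
    have t2 := tri hG v m2 m3
    have t3 := tri hG v m3 (pw e n v)
    have t4 := tri hG m2 m3 (pw e n v)
    have t5 := tri hG m1 m2 (pw e n v)
    have t6 := tri hG v m1 (pw e n v)
    have t7 := tri hG v m2 (pw e n v)
    obtain ⟨i1, _, hi1, p1⟩ := hmark n hn (g * pw e 3) (mul_mem hg (pw_mem he 3)) (by
      change G.dist v m1 + G.dist m1 _ = _; omega)
    obtain ⟨i2, _, hi2, p2⟩ := hmark n hn (g * pw e 1) (mul_mem hg (pw_mem he 1)) (by
      change G.dist v m2 + G.dist m2 _ = _; omega)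
    obtain ⟨i3, _, hi3, p3⟩ := hmark n hn g hg (by
      change G.dist v m3 + G.dist m3 _ = _; omega)
    change G.dist v m1 = _ at p1
    change G.dist v m2 = _ at p2
    change G.dist v m3 = _ at p3
    exact word_gap (D := fun i => G.dist v (pw e i v)) hk0 hle hD hi1 hi2 hi3 (by omega) (by omega)
  obtain ⟨j, hj⟩ := exists_nat_gt c
  have h3 := hc (pw e (6 * j)) (pw_mem he _) v
  have h4 := hlow j
  have h5 := hzero (6 * j)
  unfold phi at h3
  rw [h5] at h3
  rw [abs_le] at h3
  have : (j : ℤ) ≤ cnt G O (4 * L + 2 * k) v (pw e (6 * j) v) := by exact_mod_cast h4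
  simp only [Nat.cast_zero, sub_zero] at h3
  linarith [h3.2]

end Words

/-! ### The fundamental segment -/

section Segment

variable {G : SimpleGraph V} {f : V → I}

lemma geod_symm {x y z : V} (h : G.dist x z + G.dist z y = G.dist x y) :
    G.dist y z + G.dist z x = G.dist y x := by
  rw [G.dist_comm (u := y) (v := z), G.dist_comm (u := z) (v := x), G.dist_comm (u := y) (v := x)]
  omega

lemma geod_convex (hG : G.IsTree) {v a t t' u : V} (ht : G.dist v t + G.dist t a = G.dist v a)
    (ht' : G.dist v t' + G.dist t' a = G.dist v a) (hu : G.dist t u + G.dist u t' = G.dist t t') :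
    G.dist v u + G.dist u a = G.dist v a := by
  wlog hle : G.dist v t ≤ G.dist v t' generalizing t t'
  · exact this ht' ht (geod_symm hu) (by omega)
  have h1 := order hG ht ht' hle
  have := tri hG v t u; have := tri hG u t' a; have := tri hG v u a
  omega

lemma step_mem (hG : G.IsTree) {v a z s t : V} (hz : G.dist v z + G.dist z a = G.dist v a)
    (ht : G.dist v t + G.dist t a = G.dist v a) (hs : Step G z s t) :
    G.dist v s + G.dist s a = G.dist v a := by
  apply geod_convex hG hz ht
  rw [dist_adj hs.1, add_comm]; exact hs.2

lemma HasTurn.mono_left (hG : G.IsTree) {H : Subgroup (Equiv.Perm V)} {x x' y : V}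
    (h : HasTurn G H x y) (hx : G.dist x' x + G.dist x y = G.dist x' y) : HasTurn G H x' y := by
  obtain ⟨z, p, q, h, hh, a1, a2, a3, a4, a5, a6⟩ := h
  refine ⟨z, p, q, h, hh, a1, a2, a3, a4, a5, ?_⟩
  have t5 := tri hG x' x p
  have t7 := tri hG x' p y
  have t8 := tri hG p q y
  have t9 := tri hG p z q
  have := dist_adj a1
  have := dist_adj a2
  have := G.dist_comm (u := p) (v := z)
  omega

/-- A shortest segment `[v, a]` whose end vertices both turn the edge pointing into the segment;
`w` and `a'` are the neighbors of `v` and `a` on it. -/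
structure Seg (G : SimpleGraph V) (H : Subgroup (Equiv.Perm V)) (v w a a' : V) : Prop where
  left : Step G v w a
  right : Step G a a' v
  turnLeft : Turny G H v w
  turnRight : Turny G H a a'
  minimal : ∀ x p y q, Step G x p y → Step G y q x → Turny G H x p → Turny G H y q →
    G.dist v a ≤ G.dist x y

lemma Seg.symm {H : Subgroup (Equiv.Perm V)} {v w a a' : V} (S : Seg G H v w a a') :
    Seg G H a a' v w where
  left := S.right
  right := S.left
  turnLeft := S.turnRight
  turnRight := S.turnLeft
  minimal x p y q h1 h2 h3 h4 := by
    rw [G.dist_comm]; exact S.minimal x p y q h1 h2 h3 h4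

lemma exists_seg (hG : G.IsTree) (hsub : NoInvariantSubtree G (autfPlus G f))
    (hnt : autfPlus G f ≠ ⊥) : ∃ v w a a', Seg G (autfPlus G f) v w a a' := by
  classical
  obtain ⟨-, -, -, x, y, hxy, -, -⟩ := exists_edge_fixer hnt
  obtain ⟨z, p, h1, h2, h3⟩ := exists_turny hG hsub hxy
  obtain ⟨z', p', h4, h5, h6⟩ := exists_turny hG hsub h3.1
  have hex : ∃ n, ∃ v w a a', Step G v w a ∧ Step G a a' v ∧ Turny G (autfPlus G f) v w ∧
      Turny G (autfPlus G f) a a' ∧ G.dist v a = n :=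
    ⟨_, z, p, z', p', h4, h5, h3, h6, rfl⟩
  obtain ⟨v, w, a, a', b1, b2, b3, b4, b5⟩ := Nat.find_spec hex
  refine ⟨v, w, a, a', b1, b2, b3, b4, ?_⟩
  intro x p y q c1 c2 c3 c4
  rw [b5]
  exact Nat.find_min' hex ⟨x, p, y, q, c1, c2, c3, c4, rfl⟩

lemma Seg.not_turny (hG : G.IsTree) {H : Subgroup (Equiv.Perm V)} {v w a a' : V}
    (S : Seg G H v w a a') {z p : V} (hz : G.dist v z + G.dist z a = G.dist v a) (hza : z ≠ a)
    (hp : Step G z p v) : ¬ Turny G H z p := by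
  intro ht
  have hzv : v ≠ z := by
    rintro rfl; have := hp.2; simp at this
  have := S.minimal v w z p (step_restrict hG S.left hz hzv) hp S.turnLeft ht
  have := dist_pos hG hza
  omega

/-- Points of the minimal segment are pairwise inequivalent. -/
lemma Seg.inj (hG : G.IsTree) {v w a a' : V}
    (S : Seg G (autfPlus G f) v w a a') {g : Equiv.Perm V} (hg : g ∈ autfPlus G f) {x y : V}
    (hx : G.dist v x + G.dist x a = G.dist v a) (hy : G.dist v y + G.dist y a = G.dist v a)
    (hxy : g x = y) : x = y := by
  wlog hle : G.dist v x ≤ G.dist v y generalizing x y g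
  · exact (this (inv_mem hg) hy hx (by rw [Equiv.Perm.inv_eq_iff_eq, hxy]) (by omega)).symm
  by_contra hne
  obtain ⟨z, p, q, h, hh, a1, a2, a3, a4, a5, a6, a7, a8⟩ := (hasTurn_of_eq hG hg hxy hne).turny hG
  have hz := geod_convex hG hx hy a8
  have hord := order hG hx hy hle
  have h7 := a7.2
  have t1 := tri hG v z y
  have t2 := tri hG v x z
  refine S.not_turny hG hz ?_ (step_extend hG a6 ?_) a4
  · rintro rfl
    omega
  · apply geod_symm; omega

/-- If no conjugate of the edge `z y` under the stabilizer of `z` lies in the segment, the nearest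
turn `b` beyond `y` is inequivalent to all points of the segment and yields the situation excluded
by `no_word`. -/
lemma Seg.rich_aux (hG : G.IsTree) (hsub : NoInvariantSubtree G (autfPlus G f))
    (hbs : IsBoundedlySimple ↥(autfPlus G f)) (hnt : autfPlus G f ≠ ⊥) {v w a a' : V}
    (S : Seg G (autfPlus G f) v w a a') {z y : V} (hz : G.dist v z + G.dist z a = G.dist v a)
    (hzv : v ≠ z) (hzy : G.Adj z y) :
    ∃ h ∈ autfPlus G f, h z = z ∧ G.dist v (h y) + G.dist (h y) a = G.dist v a := by
  classical
  by_contra hcon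
  push Not at hcon
  have hy : G.dist v y + G.dist y a ≠ G.dist v a := hcon 1 (one_mem _) rfl
  have hex : ∃ n, ∃ b b', Step G z y b ∧ Step G b b' z ∧ Turny G (autfPlus G f) b b' ∧
      G.dist z b = n := by
    obtain ⟨b, b', h1, h2, h3⟩ := exists_turny hG hsub hzy
    exact ⟨_, b, b', h1, h2, h3, rfl⟩
  obtain ⟨b, b', b1, b2, b3, b4⟩ := Nat.find_spec hex
  have hmin : ∀ u p, Step G z y u → Step G u p z → Turny G (autfPlus G f) u p →
      G.dist z b ≤ G.dist z u := by
    intro u p h1 h2 h3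
    rw [b4]; exact Nat.find_min' hex ⟨u, p, h1, h2, h3, rfl⟩
  -- geodesics from points of the segment to `b` pass through `z`
  have hthru : ∀ t, G.dist v t + G.dist t a = G.dist v a →
      G.dist t z + G.dist z b = G.dist t b := by
    intro t ht
    apply concat hG
    intro s hs hs'
    rw [step_unique hG hs' b1] at hs
    exact hy (step_mem hG hz ht hs)
  have hv0 : G.dist v v + G.dist v a = G.dist v a := by simp
  have key : ∀ t, G.dist v t + G.dist t a = G.dist v a → ¬ HasTurn G (autfPlus G f) t b := by
    intro t ht hturn
    obtain ⟨u, p, q, h, hh, a1, a2, a3, a4, a5, a6, a7, a8⟩ := hturn.turny hG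
    have ht1 := hthru t ht
    rcases lt_trichotomy (G.dist t u) (G.dist t z) with hlt | heq | hgt
    · have h1 := order hG a8 ht1 hlt.le
      have hu := geod_convex hG ht hz h1
      have hne : G.dist u z ≠ 0 := by omega
      rcases le_total (G.dist v t) (G.dist v z) with hle | hle
      · have h2 := order hG ht hz hle
        have t1 := tri hG v t u; have t2 := tri hG v u z
        refine S.not_turny hG hu ?_ (step_extend hG a6 (geod_symm (by omega))) a4
        rintro rfl; omega
      · have h2 := order hG hz ht hle
        have c1 := G.dist_comm (u := z) (v := t)
        have c2 := G.dist_comm (u := z) (v := u)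
        have c3 := G.dist_comm (u := t) (v := u)
        have t1 := tri hG v z u; have t2 := tri hG v u t; have t3 := tri hG u t a
        refine S.symm.not_turny hG (geod_symm hu) ?_ (step_extend hG a6 (by omega)) a4
        rintro rfl; omega
    · obtain rfl := pos_unique hG a8 ht1 heq
      have hqy := step_unique hG a7 b1
      refine hcon h⁻¹ (inv_mem hh) (by rw [Equiv.Perm.inv_eq_iff_eq, a1]) ?_
      rw [show h⁻¹ y = p by rw [Equiv.Perm.inv_eq_iff_eq, a2, hqy]]
      exact step_mem hG hz ht a6
    · have h1 := order hG ht1 a8 hgt.le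
      have hzu : z ≠ u := by rintro rfl; omega
      have h3 : Step G z y u := step_restrict hG b1 (by omega) hzu
      have h4 : Step G u p z := step_restrict hG a6 (geod_symm h1) hzu.symm
      have := hmin u p h3 h4 a4
      have := a7.2
      omega
  obtain ⟨hvw, R, hR, hRv, hRw⟩ := S.turnLeft
  obtain ⟨haa, B, hB, hBa, hBa'⟩ := S.turnRight
  have b3' := b3
  obtain ⟨hbb, C, hC, hCb, hCb'⟩ := b3'
  have hthv := hthru v hv0
  have hvb : Step G v w b := step_extend hG (step_restrict hG S.left hz hzv) hthv
  have hbv : Step G b b' v := step_extend hG b2 (geod_symm hthv)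
  refine no_word hG hbs hnt hR hB hC hRv hRw hBa hBa' hCb hCb' S.left hvb S.right hbv
    (S.minimal v w b b' hvb hbv S.turnLeft b3) ?_ ?_
  · intro h hh hmem
    refine key (h b) hmem (hasTurn_of_eq hG (inv_mem hh) (by simp) ?_)
    intro e
    rw [e] at hmem
    exact hy (step_mem hG hz hmem b1)
  · intro h hh hmem
    by_contra hne
    exact key v hv0 ((hasTurn_of_eq hG (inv_mem hh) (by simp) hne).mono_left hG hmem)

/-- Every edge at a vertex of the minimal segment is moved onto the segment by the stabilizer of
that vertex. -/
lemma Seg.rich (hG : G.IsTree) (hsub : NoInvariantSubtree G (autfPlus G f))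
    (hbs : IsBoundedlySimple ↥(autfPlus G f)) (hnt : autfPlus G f ≠ ⊥) {v w a a' : V}
    (S : Seg G (autfPlus G f) v w a a') {z y : V} (hz : G.dist v z + G.dist z a = G.dist v a)
    (hzy : G.Adj z y) :
    ∃ h ∈ autfPlus G f, h z = z ∧ G.dist v (h y) + G.dist (h y) a = G.dist v a := by
  by_cases hzv : v = z
  · subst hzv
    have hne : a ≠ v := by
      rintro rfl; have := S.left.2; simp at this
    obtain ⟨h, h1, h2, h3⟩ := S.symm.rich_aux hG hsub hbs hnt (z := v) (y := y)
      (geod_symm hz) hne hzy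
    exact ⟨h, h1, h2, geod_symm h3⟩
  · exact S.rich_aux hG hsub hbs hnt hz hzv hzy

/-- The minimal segment is a fundamental domain. -/
lemma Seg.cover (hG : G.IsTree) (hsub : NoInvariantSubtree G (autfPlus G f))
    (hbs : IsBoundedlySimple ↥(autfPlus G f)) (hnt : autfPlus G f ≠ ⊥) {v w a a' : V}
    (S : Seg G (autfPlus G f) v w a a') (x : V) :
    ∃ h ∈ autfPlus G f, G.dist v (h x) + G.dist (h x) a = G.dist v a := by
  induction hn : G.dist v x generalizing x with
  | zero =>
    obtain rfl := dist_zero hG hn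
    exact ⟨1, one_mem _, by simp⟩
  | succ n ih =>
    obtain ⟨s, hs⟩ := step_exists hG (show x ≠ v by rintro rfl; simp at hn)
    obtain ⟨h, hh, h1⟩ := ih s (by
      have := hs.2
      have := G.dist_comm (u := s) (v := v)
      have := G.dist_comm (u := x) (v := v)
      omega)
    obtain ⟨k, hk, h2, h3⟩ := S.rich hG hsub hbs hnt h1 ((adj_map hh).2 hs.1.symm)
    exact ⟨k * h, mul_mem hk hh, h3⟩

end Segment

/-! ### Local structure and almost biregularity -/

section Structure

variable {G : SimpleGraph V} {f : V → I}

lemma ram_third {r : V} (h : IsRamification G r) (p q : V) : ∃ u, G.Adj r u ∧ u ≠ p ∧ u ≠ q := by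
  obtain ⟨a, b, c, h1, h2, h3, h4, h5, h6⟩ := h
  by_cases ha : a ≠ p ∧ a ≠ q
  · exact ⟨a, h4, ha⟩
  by_cases hb : b ≠ p ∧ b ≠ q
  · exact ⟨b, h5, hb⟩
  refine ⟨c, h6, ?_, ?_⟩ <;> rintro rfl <;> simp_all

lemma ram_card {r : V} (h : IsRamification G r) : (3 : Cardinal.{u}) ≤ Cardinal.mk
    (G.neighborSet r) := by
  obtain ⟨a, b, c, h1, h2, h3, h4, h5, h6⟩ := h
  have := Cardinal.mk_le_mk_of_subset (s := ({a, b, c} : Set V)) (t := G.neighborSet r) (by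
    rintro x (rfl | rfl | rfl) <;> assumption)
  refine le_trans (le_of_eq ?_) this
  rw [Cardinal.mk_insert (by simp [h1, h2]), Cardinal.mk_insert (by simp [h3]),
    Cardinal.mk_singleton]
  norm_num

lemma Turny.ram (hG : G.IsTree) {v w : V} (h : Turny G (autfPlus G f) v w) :
    IsRamification G v := by
  obtain ⟨h1, R, hR, h2, h3⟩ := h
  obtain ⟨u, h4, h5, h6⟩ := third_neighbor hG hR h2 h3 h1
  refine ⟨w, R w, u, h3.symm, h5.symm, h6.symm, h1, ?_, h4⟩
  have := (adj_map hR).2 h1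
  rwa [h2] at this

/-- `u` is a branching vertex whose stabilizer permutes its neighbors transitively. -/
def Trans (G : SimpleGraph V) (H : Subgroup (Equiv.Perm V)) (u : V) : Prop :=
  (∀ p q, G.Adj u p → G.Adj u q → ∃ h ∈ H, h u = u ∧ h p = q) ∧ IsRamification G u

/-- `u` has at most two neighbors, and its stabilizer fixes them. -/
def Rigid (G : SimpleGraph V) (H : Subgroup (Equiv.Perm V)) (u : V) : Prop :=
  (∀ h ∈ H, h u = u → ∀ p, G.Adj u p → h p = p) ∧ ∃ a b, ∀ p, G.Adj u p → p = a ∨ p = b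

lemma adj_inv {g : Equiv.Perm V} (hg : g ∈ autfPlus G f) {z p : V} (h : G.Adj (g z) p) :
    G.Adj z (g⁻¹ p) := by
  rw [← adj_map hg]; simpa using h

lemma trans_map {g : Equiv.Perm V} (hg : g ∈ autfPlus G f) {u : V}
    (h : Trans G (autfPlus G f) u) : Trans G (autfPlus G f) (g u) := by
  obtain ⟨h1, a, b, c, h2⟩ := h
  refine ⟨fun p q hp hq => ?_, g a, g b, g c, ?_⟩
  · obtain ⟨k, hk, h3, h4⟩ := h1 _ _ (adj_inv hg hp) (adj_inv hg hq)
    refine ⟨g * k * g⁻¹, mul_mem (mul_mem hg hk) (inv_mem hg), ?_, ?_⟩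
    · simp [h3]
    · rw [Equiv.Perm.mul_apply, Equiv.Perm.mul_apply, h4]; simp
  · simpa [adj_map hg] using h2

lemma rigid_map {g : Equiv.Perm V} (hg : g ∈ autfPlus G f) {u : V}
    (h : Rigid G (autfPlus G f) u) : Rigid G (autfPlus G f) (g u) := by
  obtain ⟨h1, a, b, h2⟩ := h
  refine ⟨fun k hk hu p hp => ?_, g a, g b, fun p hp => ?_⟩
  · have := h1 (g⁻¹ * k * g) (mul_mem (mul_mem (inv_mem hg) hk) hg) (by simp [hu]) _
      (adj_inv hg hp)
    rw [Equiv.Perm.mul_apply, Equiv.Perm.mul_apply, Equiv.Perm.inv_eq_iff_eq] at this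
    simpa using this
  · have := h2 _ (adj_inv hg hp)
    rwa [Equiv.Perm.inv_eq_iff_eq, Equiv.Perm.inv_eq_iff_eq] at this

lemma seg_nbr (hG : G.IsTree) {v a z s : V} (hz : G.dist v z + G.dist z a = G.dist v a)
    (hs : G.dist v s + G.dist s a = G.dist v a) (hzs : G.Adj z s) :
    Step G z s v ∨ Step G z s a := by
  rcases adj_cases hG hzs v with h | h
  · exact Or.inl h
  · right
    refine ⟨hzs, ?_⟩
    have := h.2
    have := G.dist_comm (u := z) (v := v)
    have := G.dist_comm (u := s) (v := v)
    omega

variable {v w a a' : V}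

lemma Seg.nbr_left (hG : G.IsTree) (hsub : NoInvariantSubtree G (autfPlus G f))
    (hbs : IsBoundedlySimple ↥(autfPlus G f)) (hnt : autfPlus G f ≠ ⊥)
    (S : Seg G (autfPlus G f) v w a a') {y : V} (hy : G.Adj v y) :
    ∃ h ∈ autfPlus G f, h v = v ∧ h y = w := by
  obtain ⟨h, h1, h2, h3⟩ := S.rich hG hsub hbs hnt (z := v) (by simp) hy
  refine ⟨h, h1, h2, ?_⟩
  have hadj : G.Adj v (h y) := by
    have := (adj_map h1).2 hy; rwa [h2] at this
  rcases seg_nbr hG (z := v) (by simp) h3 hadj with h4 | h4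
  · have := h4.2; simp at this
  · exact step_unique hG h4 S.left

lemma Seg.nbr_mid (hG : G.IsTree) (hsub : NoInvariantSubtree G (autfPlus G f))
    (hbs : IsBoundedlySimple ↥(autfPlus G f)) (hnt : autfPlus G f ≠ ⊥)
    (S : Seg G (autfPlus G f) v w a a') {z y : V} (hz : G.dist v z + G.dist z a = G.dist v a)
    (hzv : z ≠ v) (hza : z ≠ a) (hy : G.Adj z y) : Step G z y v ∨ Step G z y a := by
  obtain ⟨h, h1, h2, h3⟩ := S.rich hG hsub hbs hnt hz hy
  have hadj : G.Adj z (h y) := by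
    have := (adj_map h1).2 hy; rwa [h2] at this
  have hfix : ∀ s, Step G z s v ∨ Step G z s a → h s = s := by
    intro s hs
    by_contra hne
    have ht : Turny G (autfPlus G f) z s := ⟨by rcases hs with h | h <;> exact h.1, h, h1, h2, hne⟩
    rcases hs with hs | hs
    · exact S.not_turny hG hz hza hs ht
    · exact S.symm.not_turny hG (geod_symm hz) hzv hs ht
  have h4 := seg_nbr hG hz h3 hadj
  have h5 := h.injective (hfix _ h4)
  rwa [h5] at h4

lemma Seg.trans_left (hG : G.IsTree) (hsub : NoInvariantSubtree G (autfPlus G f))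
    (hbs : IsBoundedlySimple ↥(autfPlus G f)) (hnt : autfPlus G f ≠ ⊥)
    (S : Seg G (autfPlus G f) v w a a') : Trans G (autfPlus G f) v := by
  refine ⟨fun p q hp hq => ?_, S.turnLeft.ram hG⟩
  obtain ⟨h, h1, h2, h3⟩ := S.nbr_left hG hsub hbs hnt hp
  obtain ⟨k, k1, k2, k3⟩ := S.nbr_left hG hsub hbs hnt hq
  refine ⟨k⁻¹ * h, mul_mem (inv_mem k1) h1, ?_, ?_⟩
  · rw [Equiv.Perm.mul_apply, Equiv.Perm.inv_eq_iff_eq, h2, k2]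
  · rw [Equiv.Perm.mul_apply, Equiv.Perm.inv_eq_iff_eq, h3, k3]

/-- Every vertex is either a branching vertex with transitive stabilizer or has at most two
neighbors, all fixed by its stabilizer. -/
lemma Seg.trans_or_rigid (hG : G.IsTree) (hsub : NoInvariantSubtree G (autfPlus G f))
    (hbs : IsBoundedlySimple ↥(autfPlus G f)) (hnt : autfPlus G f ≠ ⊥)
    (S : Seg G (autfPlus G f) v w a a') (u : V) :
    Trans G (autfPlus G f) u ∨ Rigid G (autfPlus G f) u := by
  obtain ⟨h, hh, hz⟩ := S.cover hG hsub hbs hnt u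
  have hu : h⁻¹ (h u) = u := by simp
  have key : Trans G (autfPlus G f) (h u) ∨ Rigid G (autfPlus G f) (h u) := by
    by_cases hzv : h u = v
    · rw [hzv]; exact Or.inl (S.trans_left hG hsub hbs hnt)
    by_cases hza : h u = a
    · rw [hza]; exact Or.inl (S.symm.trans_left hG hsub hbs hnt)
    right
    have hmid := fun y => S.nbr_mid hG hsub hbs hnt (y := y) hz hzv hza
    refine ⟨fun k hk hku p hp => ?_, ?_⟩
    · by_contra hne
      have ht : Turny G (autfPlus G f) (h u) p := ⟨hp, k, hk, hku, hne⟩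
      rcases hmid p hp with h1 | h1
      · exact S.not_turny hG hz hza h1 ht
      · exact S.symm.not_turny hG (geod_symm hz) hzv h1 ht
    · obtain ⟨s, hs⟩ := step_exists hG hzv
      obtain ⟨t, ht⟩ := step_exists hG hza
      refine ⟨s, t, fun p hp => ?_⟩
      rcases hmid p hp with h1 | h1
      · exact Or.inl (step_unique hG h1 hs)
      · exact Or.inr (step_unique hG h1 ht)
  rw [← hu]
  exact key.imp (trans_map (inv_mem hh)) (rigid_map (inv_mem hh))

/-- The tree is a subdivision of a biregular tree: color each vertex by the distance to `v` of
its representative on the fundamental segment `[v, a]`. -/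
lemma Seg.almostBiregular (hG : G.IsTree) (hsub : NoInvariantSubtree G (autfPlus G f))
    (hbs : IsBoundedlySimple ↥(autfPlus G f)) (hnt : autfPlus G f ≠ ⊥)
    (S : Seg G (autfPlus G f) v w a a') :
    IsAlmostBiregular G (Cardinal.mk (G.neighborSet v)) (Cardinal.mk (G.neighborSet a)) := by
  choose r hr hmem using S.cover hG hsub hbs hnt
  have hva : G.dist v a ≠ 0 := by have := S.left.2; omega
  have hc : ∀ h ∈ autfPlus G f, ∀ x, G.dist v (h x) + G.dist (h x) a = G.dist v a →
      G.dist v (r x x) = G.dist v (h x) := by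
    intro h hh x hx
    rw [S.inj hG (mul_mem hh (inv_mem (hr x))) (hmem x) hx (by simp)]
  have hcard : ∀ h ∈ autfPlus G f, ∀ x, Cardinal.mk (G.neighborSet x) =
      Cardinal.mk (G.neighborSet (h x)) := by
    intro h hh x
    refine Cardinal.mk_congr (Equiv.subtypeEquiv h fun y => ?_)
    exact (adj_map hh).symm
  have hinvmem : ∀ h ∈ autfPlus G f, ∀ z, G.dist v z + G.dist z a = G.dist v a →
      G.dist v (r (h⁻¹ z) (h⁻¹ z)) = G.dist v z := by
    intro h hh z hz
    have e : h (h⁻¹ z) = z := by simp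
    have := hc h hh (h⁻¹ z) (by rw [e]; exact hz)
    rwa [e] at this
  refine ⟨G.dist v a, by omega, fun x => G.dist v (r x x), ?_, ?_, ?_, ?_⟩ <;> beta_reduce
  · intro x; have := hmem x; omega
  · intro x hx
    have hv := dist_zero hG hx
    refine ⟨fun y hy => ?_, ?_⟩
    · have hadj := (adj_map (hr x)).2 hy
      rw [← hv] at hadj
      obtain ⟨h, h1, h2, h3⟩ := S.nbr_left hG hsub hbs hnt hadj
      have e : (h * r x) y = w := h3
      have hw : G.dist v w = 1 := dist_adj S.left.1
      have hwm : G.dist v w + G.dist w a = G.dist v a := by have := S.left.2; omega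
      rw [hc _ (mul_mem h1 (hr x)) y (by rw [e]; exact hwm), e, hw]
    · rw [hcard _ (hr x), ← hv]
  · intro x hx
    have ha : r x x = a := dist_zero hG (by have := hmem x; omega)
    refine ⟨fun y hy => ?_, ?_⟩
    · have hadj := (adj_map (hr x)).2 hy
      rw [ha] at hadj
      obtain ⟨h, h1, h2, h3⟩ := S.symm.nbr_left hG hsub hbs hnt hadj
      have e : (h * r x) y = a' := h3
      have hw : G.dist a a' = 1 := dist_adj S.right.1
      have h4 := S.right.2
      have c1 := G.dist_comm (u := a') (v := v)
      have c2 := G.dist_comm (u := a) (v := v)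
      have c3 := G.dist_comm (u := a) (v := a')
      rw [hc _ (mul_mem h1 (hr x)) y (by rw [e]; omega), e]
      omega
    · rw [hcard _ (hr x), ha]
  · intro x hx hx'
    set z := r x x with hz
    have hzm := hmem x
    rw [← hz] at hzm
    have hzv : z ≠ v := by intro e; rw [e] at hx; simp at hx
    have hza : z ≠ a := by intro e; rw [e] at hx'; simp at hx'
    obtain ⟨s, hs⟩ := step_exists hG hzv
    obtain ⟨t, ht⟩ := step_exists hG hza
    have hsm := step_mem hG hzm (t := v) (by simp) hs
    have htm := step_mem hG hzm (t := a) (by simp) ht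
    have hs2 := hs.2
    have ht2 := ht.2
    have c1 := G.dist_comm (u := s) (v := v)
    have c2 := G.dist_comm (u := z) (v := v)
    have hback : ∀ y, G.Adj z y → G.Adj x ((r x)⁻¹ y) := fun y hy =>
      adj_inv (hr x) (by rw [← hz]; exact hy)
    refine ⟨(r x)⁻¹ s, (r x)⁻¹ t, ?_, hback s hs.1, hback t ht.1, ?_, ?_, ?_⟩
    · intro e
      rw [(r x)⁻¹.injective e] at hsm hs2 c1
      omega
    · rw [hinvmem _ (hr x) s hsm]; omega
    · rw [hinvmem _ (hr x) t htm]; omega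
    · intro y hy
      have hadj : G.Adj z (r x y) := (adj_map (hr x)).2 hy
      rcases S.nbr_mid hG hsub hbs hnt hzm hzv hza hadj with h | h
      · left; rw [← step_unique hG h hs]; simp
      · right; rw [← step_unique hG h ht]; simp

end Structure

/-! ### Gluing automorphisms along half-trees -/

section Gluing

variable {G : SimpleGraph V} {f : V → I}

/-- The map acting as `g i` on the half-tree `s i → t i` and trivially elsewhere respects every
edge, provided the pieces fit together at the boundary vertices `s i`. -/
lemma glue_aux (hG : G.IsTree) {ι : Type*} (s t : ι → V) (hst : ∀ i, G.Adj (s i) (t i))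
    (g : ι → Equiv.Perm V) (hg : ∀ i, g i ∈ autf G f)
    (hfix : ∀ i, g i (s i) = s i)
    (hdisj : ∀ i j x, Step G (s i) (t i) x → Step G (s j) (t j) x → i = j)
    (hs : ∀ i j, Step G (s j) (t j) (s i) → g j (s i) = s i) :
    ∃ F : V → V, (∀ i x, Step G (s i) (t i) x → F x = g i x) ∧
      (∀ x, (∀ i, ¬ Step G (s i) (t i) x) → F x = x) ∧
      (∀ x, f (F x) = f x) ∧ ∀ x y, G.Adj x y → G.Adj (F x) (F y) := by
  classical
  let F : V → V := fun x => if h : ∃ i, Step G (s i) (t i) x then g h.choose x else x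
  have hin : ∀ i x, Step G (s i) (t i) x → F x = g i x := by
    intro i x hx
    have h : ∃ i, Step G (s i) (t i) x := ⟨i, hx⟩
    change (if h : ∃ i, Step G (s i) (t i) x then g h.choose x else x) = _
    rw [dif_pos h, hdisj _ _ x h.choose_spec hx]
  have hout : ∀ x, (∀ i, ¬ Step G (s i) (t i) x) → F x = x := by
    intro x hx
    change (if h : ∃ i, Step G (s i) (t i) x then g h.choose x else x) = _
    rw [dif_neg (by push Not; exact hx)]
  have hFs : ∀ i, F (s i) = s i := by
    intro i
    by_cases h : ∃ j, Step G (s j) (t j) (s i)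
    · obtain ⟨j, hj⟩ := h
      rw [hin j _ hj, hs i j hj]
    · push Not at h
      exact hout _ h
  refine ⟨F, hin, hout, fun x => ?_, ?_⟩
  · by_cases h : ∃ i, Step G (s i) (t i) x
    · obtain ⟨i, hi⟩ := h
      rw [hin i x hi, (hg i).2]
    · push Not at h
      rw [hout x h]
  · have key : ∀ x y, G.Adj x y → ∀ i, Step G (s i) (t i) x → G.Adj (F x) (F y) := by
      intro x y hxy i hi
      by_cases hy : Step G (s i) (t i) y
      · rw [hin i x hi, hin i y hy, (hg i).1]; exact hxy
      · obtain ⟨rfl, rfl⟩ := boundary hG hxy hi ((step_iff_not hG (hst i).symm y).2 hy)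
        have := (hg i).1 (t i) (s i)
        rw [hfix] at this
        rw [hin i _ hi, hFs, this]; exact hxy
    intro x y hxy
    by_cases hx : ∃ i, Step G (s i) (t i) x
    · obtain ⟨i, hi⟩ := hx
      exact key x y hxy i hi
    by_cases hy : ∃ i, Step G (s i) (t i) y
    · obtain ⟨i, hi⟩ := hy
      exact (key y x hxy.symm i hi).symm
    push Not at hx hy
    rw [hout x hx, hout y hy]; exact hxy

/-- Gluing along disjoint half-trees `s i → t i` that are permuted by the automorphisms `g i`
according to `σ`: independence of the action on disjoint half-trees. -/
lemma glue (hG : G.IsTree) {ι : Type*} (s t : ι → V) (hst : ∀ i, G.Adj (s i) (t i))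
    (σ : Equiv.Perm ι) (g : ι → Equiv.Perm V) (hg : ∀ i, g i ∈ autf G f)
    (hfix : ∀ i, g i (s i) = s i) (hσ : ∀ i, s (σ i) = s i) (ht : ∀ i, g i (t i) = t (σ i))
    (hdisj : ∀ i j x, Step G (s i) (t i) x → Step G (s j) (t j) x → i = j)
    (hs : ∀ i j, Step G (s j) (t j) (s i) → g j (s i) = s i ∧ σ j = j) :
    ∃ c ∈ autf G f, (∀ i x, Step G (s i) (t i) x → c x = g i x) ∧
      (∀ x, (∀ i, ¬ Step G (s i) (t i) x) → c x = x) := by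
  have hσ' : ∀ i, s (σ.symm i) = s i := fun i => by
    have := hσ (σ.symm i); rw [σ.apply_symm_apply] at this; exact this.symm
  obtain ⟨F, F1, F2, F3, F4⟩ := glue_aux (f := f) hG s t hst g hg hfix hdisj
    (fun i j h => (hs i j h).1)
  have hgi : ∀ i x, (g i)⁻¹ (g i x) = x := fun i x => by simp
  have hgi' : ∀ i x, g i ((g i)⁻¹ x) = x := fun i x => by simp
  obtain ⟨F', F1', F2', F3', F4'⟩ := glue_aux (f := f) hG s t hst (fun i => (g (σ.symm i))⁻¹)
    (fun i => inv_mem (hg _))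
    (fun i => by rw [Equiv.Perm.inv_eq_iff_eq, ← hσ' i, hfix])
    hdisj (fun i j h => by
      obtain ⟨h1, h2⟩ := hs i j h
      have : σ.symm j = j := by rw [Equiv.symm_apply_eq, h2]
      rw [this, Equiv.Perm.inv_eq_iff_eq, h1])
  have hmap : ∀ i x, Step G (s i) (t i) x → Step G (s (σ i)) (t (σ i)) (g i x) := by
    intro i x hx
    have := (step_map (hg i)).2 hx
    rwa [hfix, ht, ← hσ i] at this
  have hmap' : ∀ i x, Step G (s i) (t i) x →
      Step G (s (σ.symm i)) (t (σ.symm i)) ((g (σ.symm i))⁻¹ x) := by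
    intro i x hx
    rw [← step_map (hg (σ.symm i)), hgi', hfix, ht, hσ', σ.apply_symm_apply]
    exact hx
  have hleft : ∀ x, F' (F x) = x := by
    intro x
    by_cases h : ∃ i, Step G (s i) (t i) x
    · obtain ⟨i, hi⟩ := h
      rw [F1 i x hi, F1' (σ i) _ (hmap i x hi), σ.symm_apply_apply, hgi]
    · push Not at h
      rw [F2 x h, F2' x h]
  have hright : ∀ x, F (F' x) = x := by
    intro x
    by_cases h : ∃ i, Step G (s i) (t i) x
    · obtain ⟨i, hi⟩ := h
      rw [F1' i x hi, F1 (σ.symm i) _ (hmap' i x hi), hgi']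
    · push Not at h
      rw [F2' x h, F2 x h]
  refine ⟨⟨F, F', hleft, hright⟩, ⟨fun x y => ⟨fun h => ?_, F4 x y⟩, F3⟩, F1, F2⟩
  have := F4' _ _ h
  change G.Adj (F' (F x)) (F' (F y)) at this
  rwa [hleft, hleft] at this

/-- Restriction of an automorphism fixing an edge to one of the two half-trees. -/
lemma split (hG : G.IsTree) {k : Equiv.Perm V} (hk : k ∈ autf G f) {s t : V} (hst : G.Adj s t)
    (hs : k s = s) (ht : k t = t) :
    ∃ c ∈ autfPlus G f, (∀ x, Step G s t x → c x = k x) ∧ (∀ x, ¬ Step G s t x → c x = x) := by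
  obtain ⟨c, hc, h1, h2⟩ := glue hG (ι := Unit) (fun _ => s) (fun _ => t) (fun _ => hst) 1
    (fun _ => k) (fun _ => hk) (fun _ => hs) (fun _ => rfl) (fun _ => ht) (fun _ _ _ _ _ => rfl)
    (fun _ _ _ => ⟨hs, rfl⟩)
  refine ⟨c, ?_, fun x hx => h1 () x hx, fun x hx => h2 x fun _ => hx⟩
  refine mem_plus_of_fix hc hst ?_ ?_
  · apply h2
    intro _ h
    have := h.2; simp at this
  · rw [h1 () t (step_self hst), ht]

/-- A rotation about `u` taking the edge `u p` to `u q` can be replaced by one supported on the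
two corresponding half-trees. -/
lemma swap (hG : G.IsTree) {r : Equiv.Perm V} (hr : r ∈ autf G f) {u p q z : V} (hu : r u = u)
    (hp : r p = q) (hpq : p ≠ q) (hup : G.Adj u p) (huz : G.Adj u z) (hzp : z ≠ p) (hzq : z ≠ q) :
    ∃ c ∈ autfPlus G f, c u = u ∧ c p = q ∧ ∀ x, Step G u z x → c x = x := by
  have huq : G.Adj u q := by
    have := (hr.1 u p).2 hup; rwa [hu, hp] at this
  have hnot : ∀ i : Bool, ¬ Step G u (if i then p else q) u := by
    intro i h
    have := h.2; simp at this
  obtain ⟨c, hc, h1, h2⟩ := glue (f := f) hG (ι := Bool) (fun _ => u) (fun i => if i then p else q)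
    (fun i => by cases i <;> simp [hup, huq]) (Equiv.boolNot)
    (fun i => if i then r else r⁻¹) (fun i => by cases i <;> simp [hr])
    (fun i => by
      cases i
      · change r⁻¹ u = u
        rw [Equiv.Perm.inv_eq_iff_eq, hu]
      · exact hu) (fun _ => rfl)
    (fun i => by
      cases i
      · change r⁻¹ q = p
        rw [Equiv.Perm.inv_eq_iff_eq, hp]
      · exact hp)
    (fun i j x hi hj => by
      have := step_unique hG hi hj
      cases i <;> cases j <;> simp_all)
    (fun i j h => absurd h (hnot j))
  have hcu : c u = u := h2 u hnot
  have hcz : ∀ x, Step G u z x → c x = x := by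
    intro x hx
    apply h2
    intro i hi
    have := step_unique hG hx hi
    cases i
    · exact hzq this
    · exact hzp this
  refine ⟨c, mem_plus_of_fix hc huz hcu (hcz z (step_self huz)), hcu, ?_, hcz⟩
  rw [← hp]
  exact h1 true p (step_self hup)

end Gluing

/-! ### Decomposition into elements supported on half-trees -/

section Decomposition

variable {G : SimpleGraph V} {f : V → I}

lemma Trans.not_rigid {H : Subgroup (Equiv.Perm V)} {u : V} (h : Trans G H u) :
    ¬ Rigid G H u := by
  rintro ⟨-, a, b, hab⟩
  obtain ⟨c, h1, h2, h3⟩ := ram_third h.2 a b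
  exact (hab c h1).elim h2 h3

/-- The stabilizer of a `Trans` vertex `m` acts transitively on each sphere about `m`. -/
lemma sphere (hG : G.IsTree)
    (hTR : ∀ u, Trans G (autfPlus G f) u ∨ Rigid G (autfPlus G f) u) {m : V}
    (hm : Trans G (autfPlus G f) m) {x y : V} (hxy : G.dist m x = G.dist m y) :
    ∃ K ∈ autfPlus G f, K m = m ∧ K x = y := by
  induction hn : G.dist m x generalizing x y with
  | zero =>
    obtain rfl := dist_zero hG hn
    rw [hn] at hxy
    exact ⟨1, one_mem _, rfl, dist_zero hG hxy.symm⟩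
  | succ n ih =>
    have hxm : x ≠ m := by rintro rfl; simp at hn
    have hym : y ≠ m := by rintro rfl; simp [hn] at hxy
    obtain ⟨x', hx'⟩ := step_exists hG hxm
    obtain ⟨y', hy'⟩ := step_exists hG hym
    have e1 := hx'.2
    have e2 := hy'.2
    rw [G.dist_comm (u := x'), G.dist_comm (u := x)] at e1
    rw [G.dist_comm (u := y'), G.dist_comm (u := y)] at e2
    obtain ⟨K', hK', hm', hKx⟩ := ih (x := x') (y := y') (by omega) (by omega)
    by_cases hy'm : y' = m
    · have hx'm : x' = m := dist_zero hG (by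
        have : G.dist m y' = 0 := by rw [hy'm]; simp
        rw [G.dist_comm]; omega)
      subst hy'm
      exact hm.1 x y (hx'm ▸ hx'.1.symm) hy'.1.symm
    by_cases hK : K' x = y
    · exact ⟨K', hK', hm', hK⟩
    obtain ⟨z, hz⟩ := step_exists hG hy'm
    have e3 := hz.2
    rw [G.dist_comm (u := z), G.dist_comm (u := y')] at e3
    have e4 := plus_dist hK' m x
    rw [hm'] at e4
    have hzK : z ≠ K' x := by rintro rfl; omega
    have hzy : z ≠ y := by rintro rfl; omega
    have hyK : G.Adj y' (K' x) := by rw [← hKx, adj_map hK']; exact hx'.1.symm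
    -- three distinct neighbors exclude the rigid alternative
    have hT : Trans G (autfPlus G f) y' := by
      refine (hTR y').resolve_right ?_
      rintro ⟨-, a, b, hab⟩
      have h1 := hab _ hyK
      have h2 := hab _ hy'.1.symm
      have h3 := hab _ hz.1
      grind
    obtain ⟨r, hr, h1, h2⟩ := hT.1 _ _ hyK hy'.1.symm
    obtain ⟨c, hc, -, h4, h5⟩ := swap hG (plus_le hr) h1 h2 hK hyK hz.1 hzK hzy
    refine ⟨c * K', mul_mem hc hK', ?_, ?_⟩
    · rw [Equiv.Perm.mul_apply, hm', h5 m hz]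
    · rw [Equiv.Perm.mul_apply, h4]

/-- Every element of the group is a product of two elements each fixing a vertex: the midpoint of
`[a, h a]` is a vertex, and the stabilizer of that vertex moves `h a` back to `a`. -/
lemma two_fixers (hG : G.IsTree)
    (hTR : ∀ u, Trans G (autfPlus G f) u ∨ Rigid G (autfPlus G f) u) {a : V}
    (ha : Trans G (autfPlus G f) a) {h : Equiv.Perm V} (hh : h ∈ autfPlus G f) :
    ∃ k₁ ∈ autfPlus G f, ∃ k₂ ∈ autfPlus G f, (∃ u, k₁ u = u) ∧ (∃ u, k₂ u = u) ∧
      h = k₁ * k₂ := by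
  by_cases hfix : h a = a
  · exact ⟨1, one_mem _, h, hh, ⟨a, rfl⟩, ⟨a, hfix⟩, (one_mul h).symm⟩
  obtain ⟨k, hk⟩ := even_disp hG hh a
  obtain ⟨m, hm1, hm2⟩ := exists_at hG (x := a) (y := h a) (i := k) (by omega)
  have hpos := dist_pos hG (Ne.symm hfix)
  rcases hTR m with hm | hm
  · obtain ⟨K, hK, h1, h2⟩ := sphere hG hTR hm (x := h a) (y := a) (by
      rw [G.dist_comm (u := m) (v := a)]; omega)
    refine ⟨K⁻¹, inv_mem hK, K * h, mul_mem hK hh, ⟨m, ?_⟩, ⟨a, ?_⟩, ?_⟩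
    · rw [Equiv.Perm.inv_eq_iff_eq, h1]
    · rw [Equiv.Perm.mul_apply, h2]
    · simp
  · exfalso
    have hma : m ≠ a := by rintro rfl; exact ha.not_rigid hm
    have hmh : m ≠ h a := by rintro rfl; simp at hm2; omega
    obtain ⟨m₁, h1⟩ := step_exists hG hma
    obtain ⟨m₂, h2⟩ := step_exists hG hmh
    have e1 := h1.2
    have e2 := h2.2
    have e3 := plus_dist hh a (h⁻¹ m₂)
    have hi : h (h⁻¹ m₂) = m₂ := by simp
    rw [hi] at e3
    have c1 := G.dist_comm (u := m₁) (v := a)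
    have c2 := G.dist_comm (u := m) (v := a)
    have c3 := G.dist_comm (u := m₂) (v := h a)
    obtain ⟨K, hK, -, h4⟩ := sphere hG hTR ha (x := m₁) (y := h⁻¹ m₂) (by omega)
    have hne : m₁ ≠ m₂ := by
      rintro rfl
      have := tri hG a m₁ (h a)
      omega
    have hmap : (h * K) m₁ = m₂ := by rw [Equiv.Perm.mul_apply, h4]; simp
    obtain ⟨z, p, q, r, hr, h5, h6, h7, -, -, h8, h9, h10⟩ :=
      (hasTurn_of_eq hG (mul_mem hh hK) hmap hne).turny hG
    have n1 : m₁ ≠ z := by rintro rfl; have := h8.2; simp at this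
    have n2 : z ≠ m₂ := by rintro rfl; have := h9.2; simp at this
    have p1 := dist_pos hG n1
    have p2 := dist_pos hG n2
    have e4 := dist_adj h1.1
    have e5 := dist_adj h2.1
    have c4 := G.dist_comm (u := m) (v := m₁)
    have := tri hG m₁ m m₂
    obtain rfl : z = m := pos_unique hG h10 (by omega) (by omega)
    exact h7 ((hm.1 r hr h5 p h8.1).symm.trans h6)

/-- An element fixing a vertex is a product of two elements each fixing an edge. -/
lemma two_edge_fixers (hG : G.IsTree)
    (hTR : ∀ u, Trans G (autfPlus G f) u ∨ Rigid G (autfPlus G f) u) {h : Equiv.Perm V}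
    (hh : h ∈ autfPlus G f) {u p : V} (hu : h u = u) (hp : G.Adj u p) :
    ∃ k₁ ∈ autfPlus G f, ∃ k₂ ∈ autfPlus G f, (∃ s t, G.Adj s t ∧ k₁ s = s ∧ k₁ t = t) ∧
      (∃ s t, G.Adj s t ∧ k₂ s = s ∧ k₂ t = t) ∧ h = k₁ * k₂ := by
  by_cases hhp : h p = p
  · exact ⟨1, one_mem _, h, hh, ⟨u, p, hp, rfl, rfl⟩, ⟨u, p, hp, hu, hhp⟩, (one_mul h).symm⟩
  have hT : Trans G (autfPlus G f) u :=
    (hTR u).resolve_right fun hr => hhp (hr.1 h hh hu p hp)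
  obtain ⟨z, h1, h2, h3⟩ := ram_third hT.2 p (h p)
  obtain ⟨c, hc, h4, h5, h6⟩ := swap hG (plus_le hh) hu rfl (Ne.symm hhp) hp h1 h2 h3
  refine ⟨c, hc, c⁻¹ * h, mul_mem (inv_mem hc) hh, ⟨u, z, h1, h4, h6 z (step_self h1)⟩,
    ⟨u, p, hp, ?_, ?_⟩, by simp⟩
  · rw [Equiv.Perm.mul_apply, hu, Equiv.Perm.inv_eq_iff_eq, h4]
  · rw [Equiv.Perm.mul_apply, Equiv.Perm.inv_eq_iff_eq, h5]

/-- `k` fixes the edge `s t` and acts trivially outside the half-tree `s → t`. -/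
def SuppOn (G : SimpleGraph V) (k : Equiv.Perm V) (s t : V) : Prop :=
  G.Adj s t ∧ k s = s ∧ k t = t ∧ ∀ x, ¬ Step G s t x → k x = x

/-- An element fixing an edge is a product of two elements supported on half-trees. -/
lemma two_supp (hG : G.IsTree) {k : Equiv.Perm V} (hk : k ∈ autfPlus G f) {s t : V}
    (hst : G.Adj s t) (hs : k s = s) (ht : k t = t) :
    ∃ k₁ ∈ autfPlus G f, ∃ k₂ ∈ autfPlus G f, SuppOn G k₁ s t ∧ SuppOn G k₂ t s ∧
      k = k₁ * k₂ := by
  obtain ⟨c, hc, h1, h2⟩ := split hG (plus_le hk) hst hs ht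
  obtain ⟨d, hd, h3, h4⟩ := split hG (plus_le hk) hst.symm ht hs
  have n1 : ¬ Step G s t s := fun h => by have := h.2; simp at this
  have n2 : ¬ Step G t s t := fun h => by have := h.2; simp at this
  refine ⟨c, hc, d, hd, ⟨hst, h2 s n1, by rw [h1 t (step_self hst), ht], h2⟩,
    ⟨hst.symm, h4 t n2, by rw [h3 s (step_self hst.symm), hs], h4⟩, ?_⟩
  ext x
  rw [Equiv.Perm.mul_apply]
  by_cases hx : Step G s t x
  · rw [h4 x hx.asymm, h1 x hx]
  · have hx' := (step_iff_not hG hst.symm x).2 hx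
    rw [h3 x hx', h2]
    have := (step_map_plus hk).2 hx'
    rw [hs, ht] at this
    exact this.asymm

end Decomposition

/-! ### Translations and commutators -/

section Hyperbolic

variable {G : SimpleGraph V} {f : V → I}

/-- A rotation about a vertex `z` of the half-tree `x → y` that moves the edge pointing back to
`x` sends the complement of this half-tree into it. -/
lemma flip (hG : G.IsTree) {h : Equiv.Perm V} (hh : h ∈ autfPlus G f) {x y z p : V}
    (hz : Step G x y z) (hp : Step G z p x) (h1 : h z = z) (h2 : h p ≠ p) {t : V}
    (ht : ¬ Step G x y t) : Step G x y (h t) := by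
  have hc := cross hG hz ((step_iff_not hG hz.1.symm t).2 ht)
  have c1 := G.dist_comm (u := z) (v := x)
  have c2 := G.dist_comm (u := x) (v := t)
  have c3 := G.dist_comm (u := z) (v := t)
  have hpt : Step G z p t := step_extend hG hp (by omega)
  have hpt' := (step_map_plus hh).2 hpt
  rw [h1] at hpt'
  refine step_extend hG hz (concat hG fun s hs hs' => h2 ?_)
  rw [← step_unique hG hs' hpt', step_unique hG hs hp]

lemma exists_flip (hG : G.IsTree) (hsub : NoInvariantSubtree G (autfPlus G f)) {x y : V}
    (hxy : G.Adj x y) :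
    ∃ h ∈ autfPlus G f, ∀ t, ¬ Step G x y t → Step G x y (h t) := by
  obtain ⟨z, p, hz, hp, -, h, hh, h1, h2⟩ := exists_turny hG hsub hxy
  exact ⟨h, hh, fun t ht => flip hG hh hz hp h1 h2 ht⟩

/-- Any half-tree can be moved into any other one. -/
lemma move (hG : G.IsTree) (hsub : NoInvariantSubtree G (autfPlus G f)) {s t p q : V}
    (hst : G.Adj s t) (hpq : G.Adj p q) :
    ∃ η ∈ autfPlus G f, ∀ x, Step G s t x → Step G p q (η x) := by
  obtain ⟨h, hh, H⟩ := exists_flip hG hsub hpq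
  obtain ⟨k, hk, K⟩ := exists_flip hG hsub hst.symm
  have K' : ∀ x, Step G s t x → Step G t s (k x) := fun x hx => K x hx.asymm
  by_cases hp : Step G s t p <;> by_cases hq : Step G s t q
  · have hside : ∀ x, Step G t s x → (Step G p q x ↔ Step G p q s) := by
      intro x hx
      have e1 := cross hG hp hx
      have e2 := cross hG hq hx
      rw [G.dist_comm (u := x) (v := p), G.dist_comm (u := s) (v := p)] at e1
      rw [G.dist_comm (u := x) (v := q), G.dist_comm (u := s) (v := q)] at e2
      unfold Step
      constructor <;> rintro ⟨-, h⟩ <;> exact ⟨hpq, by omega⟩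
    by_cases hs : Step G p q s
    · exact ⟨k, hk, fun x hx => (hside _ (K' x hx)).2 hs⟩
    · exact ⟨h * k, mul_mem hh hk, fun x hx => H _ fun h' => hs ((hside _ (K' x hx)).1 h')⟩
  · obtain ⟨rfl, rfl⟩ := boundary hG hpq hp ((step_iff_not hG hst.symm q).2 hq)
    exact ⟨k, hk, K'⟩
  · obtain ⟨rfl, rfl⟩ := boundary hG hpq.symm hq ((step_iff_not hG hst.symm p).2 hp)
    exact ⟨1, one_mem _, fun x hx => hx⟩
  · have hside : ∀ x, Step G s t x → (Step G p q x ↔ Step G p q t) := by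
      intro x hx
      have e1 := cross hG ((step_iff_not hG hst.symm p).2 hp) hx
      have e2 := cross hG ((step_iff_not hG hst.symm q).2 hq) hx
      rw [G.dist_comm (u := x) (v := p), G.dist_comm (u := t) (v := p)] at e1
      rw [G.dist_comm (u := x) (v := q), G.dist_comm (u := t) (v := q)] at e2
      unfold Step
      constructor <;> rintro ⟨-, h⟩ <;> exact ⟨hpq, by omega⟩
    by_cases ht : Step G p q t
    · exact ⟨1, one_mem _, fun x hx => (hside x hx).2 ht⟩
    · exact ⟨h, hh, fun x hx => H _ fun h' => ht ((hside x hx).1 h')⟩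

lemma exists_min {P : V → Prop} (φ : V → ℕ) (h : ∃ x, P x) :
    ∃ x, P x ∧ ∀ y, P y → φ x ≤ φ y := by
  obtain ⟨x, hx, hmin⟩ := (measure φ).wf.has_min {x | P x} h
  exact ⟨x, hx, fun y hy => not_lt.1 (hmin y hy)⟩

/-- An element `γ` without fixed vertices is a translation, and since the tree branches there is a
half-tree `p → q` hanging off its axis.  Here `p₁` and `pm` are the neighbors of `p` on the axis;
the last clause says that `γ` maps everything not behind `pm` to the part beyond `p₁`. -/
lemma axis (hG : G.IsTree) {r : V} (hr : IsRamification G r) {γ : Equiv.Perm V}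
    (hγ : γ ∈ autfPlus G f) (hfix : ∀ x, γ x ≠ x) :
    ∃ p p₁ pm q, G.Adj p q ∧ q ≠ p₁ ∧ q ≠ pm ∧ p₁ ≠ pm ∧
      ∀ x, ¬ Step G p pm x → Step G p p₁ (γ x) := by
  obtain ⟨p₀, -, h0⟩ := exists_min (P := fun _ => True) (fun x => G.dist x (γ x)) ⟨r, trivial⟩
  obtain ⟨p, hp, hmin⟩ := exists_min (P := fun x => ∀ y, G.dist x (γ x) ≤ G.dist y (γ y))
    (fun x => G.dist x r) ⟨p₀, fun y => h0 y trivial⟩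
  have hD := dist_pos hG (Ne.symm (hfix p))
  obtain ⟨k, hk⟩ := even_disp hG hγ p
  have hinv : γ (γ⁻¹ p) = p := by simp
  obtain ⟨p₁, h1⟩ := step_exists hG (Ne.symm (hfix p))
  obtain ⟨pm, h2⟩ := step_exists hG (z := p) (t := γ⁻¹ p) (fun h => hfix p
    ((congrArg γ h).trans hinv))
  have h3 := (step_map_plus hγ).2 h2
  rw [hinv] at h3
  have e1 := h1.2
  have e3 := h3.2
  have a1 := dist_adj h1.1
  have a2 := dist_adj h2.1
  have a3 := dist_adj h3.1
  have a4 := plus_dist hγ p p₁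
  have c1 := G.dist_comm (u := γ p) (v := p)
  have c2 := G.dist_comm (u := γ pm) (v := p)
  have c3 := G.dist_comm (u := pm) (v := p)
  have c4 := G.dist_comm (u := γ p) (v := γ pm)
  -- the neighbors of `p` on the axis have the same, minimal displacement
  have m1 : ∀ y, G.dist p₁ (γ p₁) ≤ G.dist y (γ y) := by
    intro y
    have := hp y
    have := tri hG p₁ (γ p) (γ p₁)
    omega
  have m2 : ∀ y, G.dist pm (γ pm) ≤ G.dist y (γ y) := by
    intro y
    have := hp y
    have := tri hG pm p (γ pm)
    omega
  have hne : p₁ ≠ pm := by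
    rintro rfl
    have := order hG (x := p) (q := p₁) (m := γ p₁) (z := γ p) (by omega) (by omega) (by omega)
    have := hp p₁
    omega
  have hq : ∃ q, G.Adj p q ∧ q ≠ p₁ ∧ q ≠ pm := by
    by_cases hpr : p = r
    · subst hpr; exact ram_third hr p₁ pm
    · obtain ⟨q, hq⟩ := step_exists hG hpr
      have := hq.2
      refine ⟨q, hq.1, ?_, ?_⟩ <;> rintro rfl
      · have := hmin q m1; omega
      · have := hmin q m2; omega
  obtain ⟨q, q1, q2, q3⟩ := hq
  refine ⟨p, p₁, pm, q, q1, q2, q3, hne, fun x hx => ?_⟩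
  refine step_extend hG h1 (concat hG fun s hs hs' => hx ?_)
  rw [step_unique hG hs h3] at hs'
  exact (step_map_plus hγ).1 hs'

/-- If the translates of a half-tree by the powers of `γ` are disjoint, then every element `k`
supported on it is a commutator with `γ`: take `c` to act as `γ ^ n * k * γ ^ (-n)` on the `n`-th
translate. -/
lemma commutator (hG : G.IsTree) {γ k : Equiv.Perm V} (hγ : γ ∈ autfPlus G f)
    (hk : k ∈ autfPlus G f) {s t : V} (hS : SuppOn G k s t)
    (hdis : ∀ n x, Step G s t x → ¬ Step G s t ((γ ^ (n + 1)) x)) :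
    ∃ c ∈ autfPlus G f, k = c * γ * c⁻¹ * γ⁻¹ := by
  obtain ⟨hst, hs, ht, hsupp⟩ := hS
  have hpow : ∀ n : ℕ, γ ^ n ∈ autfPlus G f := fun n => pow_mem hγ n
  have hcan : ∀ (n : ℕ) x, (γ ^ n)⁻¹ ((γ ^ n) x) = x := fun n x => by simp
  have hcan' : ∀ (n : ℕ) x, (γ ^ n) ((γ ^ n)⁻¹ x) = x := fun n x => by simp
  have hX : ∀ n x, Step G ((γ ^ n) s) ((γ ^ n) t) x ↔ Step G s t ((γ ^ n)⁻¹ x) := by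
    intro n x
    rw [← step_map_plus (hpow n) (z := s), hcan']
  have hlt : ∀ i j x, i < j → Step G s t ((γ ^ i)⁻¹ x) → ¬ Step G s t ((γ ^ j)⁻¹ x) := by
    intro i j x hij hi hj
    obtain ⟨n, rfl⟩ := Nat.exists_eq_add_of_lt hij
    apply hdis n _ hj
    have : (γ ^ (n + 1)) ((γ ^ (i + n + 1))⁻¹ x) = (γ ^ i)⁻¹ x := by
      rw [← Equiv.Perm.mul_apply]
      congr 1
      rw [add_assoc, add_comm, pow_add]
      group
    rwa [this]
  have hdisj : ∀ i j x, Step G ((γ ^ i) s) ((γ ^ i) t) x → Step G ((γ ^ j) s) ((γ ^ j) t) x →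
      i = j := by
    intro i j x hi hj
    rw [hX] at hi hj
    rcases lt_trichotomy i j with h | h | h
    · exact absurd hj (hlt _ _ _ h hi)
    · exact h
    · exact absurd hi (hlt _ _ _ h hj)
  have hgs : ∀ n : ℕ, (γ ^ n * k * (γ ^ n)⁻¹) ((γ ^ n) s) = (γ ^ n) s := by
    intro n; simp only [Equiv.Perm.mul_apply, hcan, hs]
  have hgt : ∀ n : ℕ, (γ ^ n * k * (γ ^ n)⁻¹) ((γ ^ n) t) = (γ ^ n) t := by
    intro n; simp only [Equiv.Perm.mul_apply, hcan, ht]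
  have hadj : ∀ n : ℕ, G.Adj ((γ ^ n) s) ((γ ^ n) t) := fun n => (adj_map (hpow n)).2 hst
  have hss : ∀ i j : ℕ, Step G ((γ ^ j) s) ((γ ^ j) t) ((γ ^ i) s) →
      (γ ^ j * k * (γ ^ j)⁻¹) ((γ ^ i) s) = (γ ^ i) s := by
    intro i j hij
    by_cases h : Step G ((γ ^ j) s) ((γ ^ j) t) ((γ ^ i) t)
    · obtain rfl := hdisj i j _ (step_self (hadj i)) h
      have := hij.2
      simp at this
    · rw [(boundary hG (hadj i) hij ((step_iff_not hG (hadj j).symm _).2 h)).1, hgt]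
  obtain ⟨c, hc, h1, h2⟩ := glue (f := f) hG (ι := ℕ) (fun n => (γ ^ n) s) (fun n => (γ ^ n) t)
    hadj 1 (fun n => γ ^ n * k * (γ ^ n)⁻¹)
    (fun n => plus_le (mul_mem (mul_mem (hpow n) hk) (inv_mem (hpow n)))) hgs (fun _ => rfl) hgt
    hdisj (fun i j h => ⟨hss i j h, rfl⟩)
  have hct : c t = t := by
    have := h1 0 t (by simpa using step_self hst)
    simpa [ht] using this
  have hcs : c s = s := by
    by_cases h : ∃ j, Step G ((γ ^ j) s) ((γ ^ j) t) s
    · obtain ⟨j, hj⟩ := h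
      rw [h1 j s hj]
      have := hss 0 j (by simpa using hj)
      simpa using this
    · push Not at h
      exact h2 s h
  refine ⟨c, mem_plus_of_fix hc hst hcs hct, ?_⟩
  have key : k * γ * c = c * γ := by
    ext x
    simp only [Equiv.Perm.mul_apply]
    by_cases h : ∃ n, Step G ((γ ^ n) s) ((γ ^ n) t) x
    · obtain ⟨n, hn⟩ := h
      have hcx := h1 n x hn
      have hn1 : Step G ((γ ^ (n + 1)) s) ((γ ^ (n + 1)) t) (γ x) := by
        rw [pow_succ']; exact (step_map_plus hγ).2 hn
      rw [h1 (n + 1) _ hn1, hcx, hsupp]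
      · simp only [pow_succ', Equiv.Perm.mul_apply, mul_inv_rev]
        simp
      · have hcn : Step G s t (k ((γ ^ n)⁻¹ x)) := by
          have := (step_map_plus hk).2 ((hX n x).1 hn)
          rwa [hs, ht] at this
        have := hdis n _ hcn
        rwa [pow_succ'] at this
    · push Not at h
      rw [h2 x h]
      by_cases h0 : Step G s t (γ x)
      · have := h1 0 (γ x) (by simpa using h0)
        simpa using this.symm
      · rw [hsupp _ h0, h2]
        intro n hn
        cases n with
        | zero => exact h0 (by simpa using hn)
        | succ n =>
          rw [pow_succ'] at hn
          exact h n ((step_map_plus hγ).1 hn)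
  rw [← key]; group

/-- An element supported on a half-tree is conjugate to a commutator with any given translation. -/
lemma supp_commutator (hG : G.IsTree) (hsub : NoInvariantSubtree G (autfPlus G f)) {r : V}
    (hr : IsRamification G r) {γ k : Equiv.Perm V} (hγ : γ ∈ autfPlus G f)
    (hfix : ∀ x, γ x ≠ x) (hk : k ∈ autfPlus G f) {s t : V} (hS : SuppOn G k s t) :
    ∃ η ∈ autfPlus G f, ∃ c ∈ autfPlus G f, η * k * η⁻¹ = c * γ * c⁻¹ * γ⁻¹ := by
  obtain ⟨p, p₁, pm, q, hpq, hq1, hqm, h1m, hax⟩ := axis hG hr hγ hfix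
  obtain ⟨η, hη, hmove⟩ := move hG hsub hS.1 hpq
  refine ⟨η, hη, ?_⟩
  have hinc : ∀ x, Step G (η s) (η t) x → Step G p q x := by
    intro x hx
    have hx' : η (η⁻¹ x) = x := by simp
    rw [← hx', step_map_plus hη] at hx
    rw [← hx']
    exact hmove _ hx
  have hiter : ∀ n x, ¬ Step G p pm x → Step G p p₁ ((γ ^ (n + 1)) x) := by
    intro n x hx
    induction n with
    | zero => simpa using hax x hx
    | succ n ih =>
      rw [pow_succ']
      exact hax _ fun h => h1m (step_unique hG ih h)
  refine commutator hG hγ (mul_mem (mul_mem hη hk) (inv_mem hη)) (s := η s) (t := η t)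
    ⟨(adj_map hη).2 hS.1, ?_, ?_, ?_⟩ ?_
  · simp [hS.2.1]
  · simp [hS.2.2.1]
  · intro x hx
    have hx' : η (η⁻¹ x) = x := by simp
    rw [Equiv.Perm.mul_apply, Equiv.Perm.mul_apply, hS.2.2.2, hx']
    rwa [← hx', step_map_plus hη] at hx
  · intro n x hx hn
    have h1 := hiter n x fun h => hqm (step_unique hG (hinc x hx) h)
    exact hq1 (step_unique hG (hinc _ hn) h1)

lemma dist_ne_of_steps (hG : G.IsTree) {v x u z z₁ : V} (hu : Step G v x u) (hz : Step G v x z)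
    (hz₁ : ¬ Step G v x z₁) (h : G.dist v z₁ = G.dist v z) : G.dist u z₁ ≠ G.dist u z := by
  have h1 := concat hG (x := u) (m := v) (z := z₁) (fun s hs hs' => hz₁ (by
    rwa [step_unique hG hs hu] at hs'))
  have := tri hG u x z
  have := hu.2
  have := hz.2
  have := G.dist_comm (u := u) (v := v)
  have := G.dist_comm (u := u) (v := x)
  omega

/-- A nontrivial element fixing a vertex has a conjugate with which its product is fixed-point
free: conjugating by a flip makes the moved half-trees cover the whole tree. -/
lemma exists_translation (hG : G.IsTree) (hsub : NoInvariantSubtree G (autfPlus G f))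
    {g : Equiv.Perm V} (hg : g ∈ autfPlus G f) (hg1 : g ≠ 1) (hfix : ∃ v, g v = v) :
    ∃ B ∈ autfPlus G f, ∀ z, (g * (B * g * B⁻¹)) z ≠ z := by
  obtain ⟨w, hw⟩ : ∃ w, g w ≠ w := by
    by_contra! h
    exact hg1 (Equiv.ext h)
  obtain ⟨v, hv, hmin⟩ := exists_min (P := fun v => g v = v) (fun v => G.dist v w) hfix
  obtain ⟨x, hx⟩ := step_exists hG (z := v) (t := w) (by rintro rfl; exact hw hv)
  have hgx : g x ≠ x := by
    intro h
    have := hmin x h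
    have := hx.2
    omega
  obtain ⟨a, a', ha, ha', -, B, hB, hBa, hBa'⟩ := exists_turny hG hsub hx.1
  have hvv : ¬ Step G v x v := fun h => by have := h.2; simp at this
  have hf1 : ∀ t, ¬ Step G v x t → Step G v x (B t) := fun t => flip hG hB ha ha' hBa hBa'
  have hf2 : ∀ t, ¬ Step G v x t → Step G v x (B⁻¹ t) := fun t =>
    flip hG (inv_mem hB) ha ha' (by rw [Equiv.Perm.inv_eq_iff_eq, hBa])
      (by rw [Ne, Equiv.Perm.inv_eq_iff_eq]; exact fun h => hBa' h.symm)
  have hBi : ∀ t, B (B⁻¹ t) = t := fun t => by simp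
  have hf3 : ∀ t, ¬ Step G v x t → Step G (B v) (B x) t := by
    intro t ht
    rw [← hBi t, step_map_plus hB]
    exact hf2 t ht
  have hg' : B * g * B⁻¹ ∈ autfPlus G f := mul_mem (mul_mem hB hg) (inv_mem hB)
  have hg'u : (B * g * B⁻¹) (B v) = B v := by simp [hv]
  have hg'y : (B * g * B⁻¹) (B x) ≠ B x := by simpa using hgx
  refine ⟨B, hB, fun z hz => ?_⟩
  rw [Equiv.Perm.mul_apply] at hz
  set g' := B * g * B⁻¹
  have d1 : G.dist v (g' z) = G.dist v z := by
    have := plus_dist hg v (g' z)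
    rwa [hv, hz, eq_comm] at this
  have d2 : G.dist (B v) (g' z) = G.dist (B v) z := by
    have := plus_dist hg' (B v) z
    rwa [hg'u] at this
  by_cases hzX : Step G v x z
  · refine dist_ne_of_steps hG (hf1 v hvv) hzX (fun h => hgx ?_) d1 d2
    have := (step_map_plus hg).2 h
    rw [hv, hz] at this
    exact step_unique hG this hzX
  · have hzX' := hf3 z hzX
    refine dist_ne_of_steps hG (hf3 v hvv) hzX' (fun h => hg'y ?_) d2 d1
    have := (step_map_plus hg').2 hzX'
    rw [hg'u] at this
    exact step_unique hG this h

end Hyperbolic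

/-! ### Counting conjugates -/

section Counting

variable {G : SimpleGraph V} {f : V → I}

/-- `h` is a product of at most `n` conjugates of `g` or `g⁻¹` by elements of `H`. -/
def ConjProd (H : Subgroup (Equiv.Perm V)) (g : Equiv.Perm V) (n : ℕ) (h : Equiv.Perm V) : Prop :=
  ∃ l : List (Equiv.Perm V), l.length ≤ n ∧
    (∀ x ∈ l, ∃ c ∈ H, x = c * g * c⁻¹ ∨ x = c * g⁻¹ * c⁻¹) ∧ l.prod = h

variable {H : Subgroup (Equiv.Perm V)} {g γ h h' : Equiv.Perm V} {m n : ℕ}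

lemma ConjProd.mul (h1 : ConjProd H g m h) (h2 : ConjProd H g n h') :
    ConjProd H g (m + n) (h * h') := by
  obtain ⟨l, l1, l2, rfl⟩ := h1
  obtain ⟨k, k1, k2, rfl⟩ := h2
  refine ⟨l ++ k, by rw [List.length_append]; omega, fun x hx => ?_, List.prod_append⟩
  exact (List.mem_append.1 hx).elim (l2 x) (k2 x)

lemma ConjProd.conj (h1 : ConjProd H g n h) {c : Equiv.Perm V} (hc : c ∈ H) :
    ConjProd H g n (c * h * c⁻¹) := by
  obtain ⟨l, l1, l2, rfl⟩ := h1
  refine ⟨l.map (MulAut.conj c), by simpa using l1, fun x hx => ?_, ?_⟩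
  · obtain ⟨y, hy, rfl⟩ := List.mem_map.1 hx
    obtain ⟨d, hd, rfl | rfl⟩ := l2 y hy
    · exact ⟨c * d, mul_mem hc hd, Or.inl (by rw [MulAut.conj_apply]; group)⟩
    · exact ⟨c * d, mul_mem hc hd, Or.inr (by rw [MulAut.conj_apply]; group)⟩
  · rw [← map_list_prod, MulAut.conj_apply]

lemma ConjProd.inv (h1 : ConjProd H g n h) : ConjProd H g n h⁻¹ := by
  obtain ⟨l, l1, l2, rfl⟩ := h1
  refine ⟨(l.map (·⁻¹)).reverse, by simpa using l1, fun x hx => ?_,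
    (List.prod_inv_reverse l).symm⟩
  obtain ⟨y, hy, rfl⟩ := List.mem_map.1 (List.mem_reverse.1 hx)
  obtain ⟨d, hd, rfl | rfl⟩ := l2 y hy
  · exact ⟨d, hd, Or.inr (by group)⟩
  · exact ⟨d, hd, Or.inl (by group)⟩

lemma ConjProd.comp (hγ : ConjProd H g m γ) (hh : ConjProd H γ n h) :
    ConjProd H g (n * m) h := by
  obtain ⟨l, l1, l2, rfl⟩ := hh
  suffices H' : ConjProd H g (l.length * m) l.prod by
    obtain ⟨k, k1, k2, k3⟩ := H'
    exact ⟨k, k1.trans (Nat.mul_le_mul_right m l1), k2, k3⟩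
  clear l1
  induction l with
  | nil => exact ⟨[], by simp, by simp, rfl⟩
  | cons a l ih =>
    rw [List.prod_cons, List.length_cons, add_mul, one_mul, add_comm]
    refine ConjProd.mul ?_ (ih fun x hx => l2 x (List.mem_cons_of_mem a hx))
    obtain ⟨c, hc, rfl | rfl⟩ := l2 a List.mem_cons_self
    · exact hγ.conj hc
    · exact hγ.inv.conj hc

lemma conjProd_one (H : Subgroup (Equiv.Perm V)) (g : Equiv.Perm V) {c : Equiv.Perm V}
    (hc : c ∈ H) : ConjProd H g 1 (c * g * c⁻¹) :=
  ⟨[c * g * c⁻¹], by simp, by simpa using ⟨c, hc, Or.inl rfl⟩, by simp⟩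

/-- Relative to a translation, elements supported on a half-tree, fixing an edge, fixing a vertex,
and arbitrary elements need at most 2, 4, 8 and 16 factors respectively. -/
lemma conjProd_translation (hG : G.IsTree) (hsub : NoInvariantSubtree G (autfPlus G f))
    (hTR : ∀ u, Trans G (autfPlus G f) u ∨ Rigid G (autfPlus G f) u) {a : V}
    (ha : Trans G (autfPlus G f) a) (hγ : γ ∈ autfPlus G f) (hfix : ∀ x, γ x ≠ x)
    (hh : h ∈ autfPlus G f) : ConjProd (autfPlus G f) γ 16 h := by
  have hsupp : ∀ k ∈ autfPlus G f, ∀ s t, SuppOn G k s t → ConjProd (autfPlus G f) γ 2 k := by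
    intro k hk s t hS
    obtain ⟨η, hη, c, hc, e⟩ := supp_commutator hG hsub ha.2 hγ hfix hk hS
    have h1 := (conjProd_one (autfPlus G f) γ hc).mul
      (conjProd_one (autfPlus G f) γ (one_mem _)).inv
    have h2 := h1.conj (inv_mem hη)
    have e2 : η⁻¹ * (c * γ * c⁻¹ * (1 * γ * 1⁻¹)⁻¹) * η⁻¹⁻¹ = k := by
      have : c * γ * c⁻¹ * (1 * γ * 1⁻¹)⁻¹ = η * k * η⁻¹ := by rw [e]; simp
      rw [this]; group
    rwa [e2] at h2
  have hedge : ∀ k ∈ autfPlus G f, (∃ s t, G.Adj s t ∧ k s = s ∧ k t = t) →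
      ConjProd (autfPlus G f) γ 4 k := by
    rintro k hk ⟨s, t, hst, hs, ht⟩
    obtain ⟨k₁, h1, k₂, h2, h3, h4, rfl⟩ := two_supp hG hk hst hs ht
    exact (hsupp k₁ h1 _ _ h3).mul (hsupp k₂ h2 _ _ h4)
  have hvert : ∀ k ∈ autfPlus G f, (∃ u, k u = u) → ConjProd (autfPlus G f) γ 8 k := by
    rintro k hk ⟨u, hu⟩
    obtain ⟨p, hp⟩ := step_exists hG (Ne.symm (hfix u))
    obtain ⟨k₁, h1, k₂, h2, h3, h4, rfl⟩ := two_edge_fixers hG hTR hk hu hp.1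
    exact (hedge k₁ h1 h3).mul (hedge k₂ h2 h4)
  obtain ⟨k₁, h1, k₂, h2, h3, h4, rfl⟩ := two_fixers hG hTR ha hh
  exact (hvert k₁ h1 h3).mul (hvert k₂ h2 h4)

lemma conjProd_all (hG : G.IsTree) (hsub : NoInvariantSubtree G (autfPlus G f))
    (hTR : ∀ u, Trans G (autfPlus G f) u ∨ Rigid G (autfPlus G f) u) {a : V}
    (ha : Trans G (autfPlus G f) a) (hg : g ∈ autfPlus G f) (hg1 : g ≠ 1)
    (hh : h ∈ autfPlus G f) : ConjProd (autfPlus G f) g 32 h := by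
  by_cases hfix : ∃ v, g v = v
  · obtain ⟨B, hB, hne⟩ := exists_translation hG hsub hg hg1 hfix
    have h1 := (conjProd_one (autfPlus G f) g (one_mem _)).mul
      (conjProd_one (autfPlus G f) g hB)
    rw [one_mul, inv_one, mul_one] at h1
    exact h1.comp (conjProd_translation hG hsub hTR ha
      (mul_mem hg (mul_mem (mul_mem hB hg) (inv_mem hB))) hne hh)
  · push Not at hfix
    obtain ⟨l, l1, l2⟩ := conjProd_translation hG hsub hTR ha hg hfix hh
    exact ⟨l, by omega, l2⟩

/-- Transfer from products of permutations to products inside the subgroup. -/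
lemma boundedlySimple_of_conjProd
    (hall : ∀ g ∈ H, g ≠ 1 → ∀ h ∈ H, ConjProd H g n h) : IsNBoundedlySimple ↥H n := by
  rintro ⟨g, hg⟩ ⟨h, hh⟩ hg1 -
  obtain ⟨l, l1, l2, l3⟩ := hall g hg (fun e => hg1 (Subtype.ext e)) h hh
  have hlH : ∀ x ∈ l, x ∈ H := by
    intro x hx
    obtain ⟨c, hc, rfl | rfl⟩ := l2 x hx
    · exact mul_mem (mul_mem hc hg) (inv_mem hc)
    · exact mul_mem (mul_mem hc (inv_mem hg)) (inv_mem hc)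
  lift l to List H using hlH
  refine ⟨l, by simpa using l1, fun x hx => ?_, Subtype.ext ?_⟩
  · obtain ⟨c, hc, e | e⟩ := l2 x (List.mem_map_of_mem hx)
    · exact ⟨⟨c, hc⟩, Or.inl (Subtype.ext e)⟩
    · exact ⟨⟨c, hc⟩, Or.inr (Subtype.ext e)⟩
  · exact (map_list_prod H.subtype l).trans l3

end Counting

/-- if `Aut_f⁺(A)` leaves no nonempty proper subtree invariant
and is boundedly simple and nontrivial, then `A` is an almost `(n,m)`-regular
tree for some `n, m ≥ 3`, and `Aut_f⁺(A)` is 32-boundedly simple. -/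
theorem main_theorem (G : SimpleGraph V) (hG : G.IsTree) (f : V → I)
    (hsub : NoInvariantSubtree G (autfPlus G f))
    (hbs : IsBoundedlySimple ↥(autfPlus G f))
    (hnt : autfPlus G f ≠ ⊥) :
    (∃ n m : Cardinal.{u}, 3 ≤ n ∧ 3 ≤ m ∧ IsAlmostBiregular G n m) ∧
      IsNBoundedlySimple ↥(autfPlus G f) 32 := by
  obtain ⟨v, w, a, a', S⟩ := exists_seg hG hsub hnt
  refine ⟨⟨_, _, ram_card (S.turnLeft.ram hG), ram_card (S.turnRight.ram hG),
    S.almostBiregular hG hsub hbs hnt⟩, ?_⟩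
  exact boundedlySimple_of_conjProd fun g hg hg1 h hh =>
    conjProd_all hG hsub (S.trans_or_rigid hG hsub hbs hnt) (S.trans_left hG hsub hbs hnt)
      hg hg1 hh

end BSTrees
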